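/- arXiv:2503.12275 — 8 statements merged into one kernel-verified Lean document; each statement's English description precedes it below -/
import Mathlib

section
/- Let n and d be positive integers with d ≤ n. For every symmetric polynomial f ∈ ℝ[X_1,…,X_n] of total degree at most d there exists a unique polynomial g ∈ ℝ[Z_1,…,Z_d] such that f = g(p_1,…,p_d), where p_j = X_1^j + X_2^j + ⋯ + X_n^j denotes the j-th power sum polynomial. -/
open MvPolynomial

/-!
The elementary symmetric polynomials `e_1, …, e_d` with `d ≤ n` are algebraically independent.
Newton's identities say that `p_k = ± k e_k` up to a polynomial in the earlier `e_i` and `p_i`, and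
such a triangular change with unit diagonal preserves both the generated subalgebra and algebraic
independence. So the uniqueness of `g` is inherited from the `e_k`, and for existence it suffices to
write `f = q(e_1, …, e_n)`: the homogeneous component of `f` of degree `k` is the image of the part
of `q` of weight `k`, where `e_i` has weight `i`, and for `k ≤ d` that part only involves
`e_1, …, e_d`.
-/

section Triangular

open Set

variable {R A : Type*} [CommRing R] [CommRing A] [Algebra R A]

lemma algebraicIndepOn_Iio_iff {x : ℕ → A} {d : ℕ} :
    AlgebraicIndepOn R x (Iio d) ↔ AlgebraicIndependent R fun j : Fin d => x j :=
  (algebraicIndependent_equiv (Fin.equivSubtype (n := d)) (f := fun j : Iio d => x j)).symm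

lemma adjoin_image_Iio_eq_range_aeval (x : ℕ → A) (d : ℕ) :
    Algebra.adjoin R (x '' Iio d) = (aeval (R := R) fun j : Fin d => x j).range := by
  rw [← Fin.range_val, ← range_comp, Algebra.adjoin_range_eq_range_aeval]
  rfl

lemma transcendental_units_smul_add {a : A} (ha : Transcendental R a) (c : Rˣ) (b : R) :
    Transcendental R (c • a + algebraMap R A b) := by
  rw [transcendental_iff_injective] at ha ⊢
  let affine := Polynomial.algEquivCMulXAddC (c : R) b
  have aeval_comp_affine : (Polynomial.aeval a).comp affine.toAlgHom =
      Polynomial.aeval (c • a + algebraMap R A b) := by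
    ext
    simp [affine, Algebra.smul_def, Units.smul_def]
  rw [← aeval_comp_affine]
  exact ha.comp affine.injective

variable (R) in
/-- Two sequences are triangularly related over `R` if the `k`-th terms agree up to a unit of `R`
modulo the subalgebra generated by the earlier terms. Allowing the earlier terms of both sequences
makes the relation symmetric and lets Newton's identities be used as they stand. -/
def TriangularlyRelated (x y : ℕ → A) : Prop :=
  ∀ k, ∃ c : Rˣ, y k - c • x k ∈ Algebra.adjoin R (x '' Iio k ∪ y '' Iio k)

namespace TriangularlyRelated

variable {x y : ℕ → A}

lemma symm (h : TriangularlyRelated R x y) : TriangularlyRelated R y x := by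
  intro k
  obtain ⟨c, hc⟩ := h k
  refine ⟨c⁻¹, ?_⟩
  have key : x k - c⁻¹ • y k = -((c⁻¹ : Rˣ) : R) • (y k - c • x k) := by
    rw [neg_smul, ← Units.smul_def, smul_sub, inv_smul_smul, neg_sub]
  rw [key, union_comm]
  exact Subalgebra.smul_mem _ hc _

lemma adjoin_image_Iio_le (h : TriangularlyRelated R x y) (d : ℕ) :
    Algebra.adjoin R (y '' Iio d) ≤ Algebra.adjoin R (x '' Iio d) := by
  have y_mem : ∀ k < d, y k ∈ Algebra.adjoin R (x '' Iio d) := by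
    intro k
    induction k using Nat.strong_induction_on with
    | _ k ih =>
      intro hk
      obtain ⟨c, hc⟩ := h k
      have earlier_le : Algebra.adjoin R (x '' Iio k ∪ y '' Iio k) ≤
          Algebra.adjoin R (x '' Iio d) := by
        refine Algebra.adjoin_le (union_subset ?_ ?_)
        · exact (image_mono (Iio_subset_Iio hk.le)).trans Algebra.subset_adjoin
        · rintro _ ⟨i, hi, rfl⟩
          exact ih i hi (hi.trans hk)
      have x_mem : x k ∈ Algebra.adjoin R (x '' Iio d) :=
        Algebra.subset_adjoin (mem_image_of_mem x hk)
      rw [← sub_add_cancel (y k) (c • x k)]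
      exact add_mem (earlier_le hc) (Subalgebra.smul_mem _ x_mem (c : R))
  exact Algebra.adjoin_le (image_subset_iff.2 y_mem)

lemma adjoin_image_Iio_eq (h : TriangularlyRelated R x y) (d : ℕ) :
    Algebra.adjoin R (y '' Iio d) = Algebra.adjoin R (x '' Iio d) :=
  (h.adjoin_image_Iio_le d).antisymm (h.symm.adjoin_image_Iio_le d)

lemma transcendental (h : TriangularlyRelated R x y) {k : ℕ}
    (hx : Transcendental (Algebra.adjoin R (x '' Iio k)) (x k)) :
    Transcendental (Algebra.adjoin R (x '' Iio k)) (y k) := by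
  obtain ⟨c, hc⟩ := h k
  rw [Algebra.adjoin_union, h.adjoin_image_Iio_eq, sup_idem] at hc
  let S := Algebra.adjoin R (x '' Iio k)
  have y_eq : Units.map (algebraMap R S).toMonoidHom c • x k + algebraMap S A ⟨_, hc⟩ = y k := by
    simp [Units.smul_def]
  rw [← y_eq]
  exact transcendental_units_smul_add hx _ _

lemma algebraicIndepOn_Iio (h : TriangularlyRelated R x y) {d : ℕ}
    (hx : AlgebraicIndepOn R x (Iio d)) : AlgebraicIndepOn R y (Iio d) := by
  induction d with
  | zero => exact algebraicIndependent_empty_type_iff.2 hx.algebraMap_injective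
  | succ d ih =>
    rw [← Order.succ_eq_add_one, Order.Iio_succ_eq_insert] at hx ⊢
    rw [AlgebraicIndepOn.insert_iff self_notMem_Iio] at hx
    refine (ih hx.1).insert ?_
    rw [h.adjoin_image_Iio_eq]
    exact h.transcendental hx.2

end TriangularlyRelated

end Triangular

section WeightedHomogeneous

variable {ι σ R : Type*} [CommSemiring R]

lemma isHomogeneous_aeval_monomial {w : ι → ℕ} {x : ι → MvPolynomial σ R}
    (hx : ∀ i, (x i).IsHomogeneous (w i)) (t : ι →₀ ℕ) (r : R) :
    (aeval x (monomial t r)).IsHomogeneous (Finsupp.weight w t) := by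
  rw [aeval_monomial, ← zero_add (Finsupp.weight w t), Finsupp.weight_apply]
  refine (isHomogeneous_C σ r).mul (IsHomogeneous.prod _ _ _ fun i _ => ?_)
  simpa only [smul_eq_mul, mul_comm] using (hx i).pow (t i)

lemma homogeneousComponent_aeval {w : ι → ℕ} {x : ι → MvPolynomial σ R}
    (hx : ∀ i, (x i).IsHomogeneous (w i)) (k : ℕ) (q : MvPolynomial ι R) :
    homogeneousComponent k (aeval x q) = aeval x (weightedHomogeneousComponent w k q) := by
  induction q using MvPolynomial.induction_on' with
  | monomial t r =>
    rw [homogeneousComponent_of_mem (isHomogeneous_aeval_monomial hx t r),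
      weightedHomogeneousComponent_of_mem (isWeightedHomogeneous_monomial w t r rfl),
      apply_ite (aeval x), map_zero]
  | add p q hp hq => simp only [map_add, hp, hq]

lemma mem_supported_of_isWeightedHomogeneous {w : ι → ℕ} {k : ℕ} {q : MvPolynomial ι R}
    (hq : q.IsWeightedHomogeneous w k) : q ∈ supported R {i | w i ≤ k} := by
  rw [mem_supported]
  intro i hi
  obtain ⟨t, ht, hit⟩ := (mem_vars_iff_mem_support i).1 hi
  rw [← hq (mem_support_iff.1 ht)]
  exact Finsupp.le_weight_of_ne_zero' w (Finsupp.mem_support_iff.1 hit)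

lemma sum_range_homogeneousComponent {d : ℕ} {f : MvPolynomial σ R} (hf : f.totalDegree ≤ d) :
    ∑ k ∈ Finset.range (d + 1), homogeneousComponent k f = f := by
  conv_rhs => rw [← sum_homogeneousComponent f]
  refine (Finset.sum_subset (Finset.range_mono (by lia)) fun k _ hk => ?_).symm
  exact homogeneousComponent_eq_zero k f (by simpa using hk)

lemma aeval_mem_adjoin_of_totalDegree_le {w : ι → ℕ} {x : ι → MvPolynomial σ R}
    (hx : ∀ i, (x i).IsHomogeneous (w i)) {d : ℕ} {q : MvPolynomial ι R}
    (hd : (aeval x q).totalDegree ≤ d) : aeval x q ∈ Algebra.adjoin R (x '' {i | w i ≤ d}) := by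
  rw [← sum_range_homogeneousComponent hd]
  refine sum_mem fun k hk => ?_
  have part_mem : weightedHomogeneousComponent w k q ∈ supported R {i | w i ≤ d} := by
    refine supported_mono (fun i hi => hi.trans (Finset.mem_range_succ_iff.1 hk)) <|
      mem_supported_of_isWeightedHomogeneous
        (weightedHomogeneousComponent_isWeightedHomogeneous k q)
  rw [homogeneousComponent_aeval hx]
  have image_mem := Subalgebra.mem_map.2 ⟨_, part_mem, (rfl : aeval x _ = _)⟩
  simpa only [supported_eq_adjoin_X, AlgHom.map_adjoin, Set.image_image, aeval_X] using image_mem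

end WeightedHomogeneous

section SymmetricPolynomials

open Set

variable (σ R : Type*) [Fintype σ]

lemma isHomogeneous_esymm [CommSemiring R] (k : ℕ) : (esymm σ R k).IsHomogeneous k := by
  refine IsHomogeneous.sum _ _ _ fun s hs => ?_
  rw [← (Finset.mem_powersetCard.1 hs).2, Finset.card_eq_sum_ones]
  exact IsHomogeneous.prod s _ _ fun i _ => isHomogeneous_X R i

variable [CommRing R]

lemma triangularlyRelated_esymm_psum [Algebra ℚ R] :
    TriangularlyRelated R (fun k => esymm σ R (k + 1)) (fun k => psum σ R (k + 1)) := by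
  intro k
  have isUnit_coeff : IsUnit ((-1) ^ (k + 1 + 1) * ((k + 1 : ℕ) : R)) := by
    refine (isUnit_one.neg.pow _).mul ?_
    rw [← map_natCast (algebraMap ℚ R)]
    exact (IsUnit.mk0 _ (Nat.cast_ne_zero.2 k.succ_ne_zero)).map (algebraMap ℚ R)
  refine ⟨isUnit_coeff.unit, ?_⟩
  have newton : psum σ R (k + 1) - isUnit_coeff.unit • esymm σ R (k + 1) =
      -∑ a ∈ Finset.HasAntidiagonal.antidiagonal (k + 1) with a.1 ∈ Ioo 0 (k + 1),
        (-1) ^ a.1 * esymm σ R a.1 * psum σ R a.2 := by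
    rw [psum_eq_mul_esymm_sub_sum σ R (k + 1) k.succ_pos]
    simp [Units.smul_def, smul_eq_C_mul]
  rw [newton]
  refine neg_mem (sum_mem fun a ha => ?_)
  obtain ⟨hsum, hpos, hlt⟩ : a.1 + a.2 = k + 1 ∧ 0 < a.1 ∧ a.1 < k + 1 := by
    simpa only [Finset.mem_filter, Finset.HasAntidiagonal.mem_antidiagonal, mem_Ioo] using ha
  have esymm_mem : esymm σ R a.1 ∈ (fun k => esymm σ R (k + 1)) '' Iio k :=
    ⟨a.1 - 1, mem_Iio.2 (by lia), congrArg (esymm σ R) (by lia)⟩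
  have psum_mem : psum σ R a.2 ∈ (fun k => psum σ R (k + 1)) '' Iio k :=
    ⟨a.2 - 1, mem_Iio.2 (by lia), congrArg (psum σ R) (by lia)⟩
  exact mul_mem (mul_mem (pow_mem (neg_mem (one_mem _)) _)
    (Algebra.subset_adjoin (Or.inl esymm_mem))) (Algebra.subset_adjoin (Or.inr psum_mem))

variable {σ R}

lemma algebraicIndepOn_esymm {d : ℕ} (hd : d ≤ Fintype.card σ) :
    AlgebraicIndepOn R (fun k => esymm σ R (k + 1)) (Iio d) := by
  have esymm_indep : AlgebraicIndependent R fun j : Fin d => esymm σ R ((j : ℕ) + 1) := by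
    intro p q hpq
    apply esymmAlgHom_injective R hd
    apply Subtype.ext
    rwa [esymmAlgHom_apply, esymmAlgHom_apply]
  exact algebraicIndepOn_Iio_iff.2 esymm_indep

lemma mem_adjoin_esymm {d : ℕ} {f : MvPolynomial σ R} (hsym : f.IsSymmetric)
    (hdeg : f.totalDegree ≤ d) :
    f ∈ Algebra.adjoin R ((fun k => esymm σ R (k + 1)) '' Iio d) := by
  obtain ⟨q, hq⟩ := esymmAlgHom_surjective R le_rfl ⟨f, hsym⟩
  obtain rfl : aeval (fun i : Fin (Fintype.card σ) => esymm σ R (i + 1)) q = f := by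
    rw [← esymmAlgHom_apply, hq]
  have esymm_homogeneous (i : Fin (Fintype.card σ)) := isHomogeneous_esymm σ R (i + 1)
  refine Algebra.adjoin_mono ?_ (aeval_mem_adjoin_of_totalDegree_le esymm_homogeneous hdeg)
  rintro _ ⟨i, hi, rfl⟩
  exact ⟨i, hi, rfl⟩

theorem unique_powerSum_representation_general [Algebra ℚ R] {d : ℕ} (hd : d ≤ Fintype.card σ)
    {f : MvPolynomial σ R} (hsym : f.IsSymmetric) (hdeg : f.totalDegree ≤ d) :
    ∃! g : MvPolynomial (Fin d) R, aeval (fun j : Fin d => psum σ R ((j : ℕ) + 1)) g = f := by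
  have newton := triangularlyRelated_esymm_psum σ R
  have psum_indep :=
    algebraicIndepOn_Iio_iff.1 (newton.algebraicIndepOn_Iio (algebraicIndepOn_esymm hd))
  have f_mem := mem_adjoin_esymm hsym hdeg
  rw [← newton.adjoin_image_Iio_eq, adjoin_image_Iio_eq_range_aeval] at f_mem
  obtain ⟨g, hg⟩ := f_mem
  exact ⟨g, hg, fun g' hg' => psum_indep (hg'.trans hg.symm)⟩

end SymmetricPolynomials

/-- For `0 < d ≤ n`, every symmetric polynomial
`f ∈ ℝ[X_1,…,X_n]` of total degree at most `d` can be written uniquely as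
`g(p_1,…,p_d)` where `p_j` is the `j`-th power sum polynomial. -/
theorem unique_powerSum_representation (n d : ℕ) (hn : 0 < n) (hd : 0 < d) (hdn : d ≤ n)
    (f : MvPolynomial (Fin n) ℝ) (hsym : f.IsSymmetric) (hdeg : f.totalDegree ≤ d) :
    ∃! g : MvPolynomial (Fin d) ℝ,
      MvPolynomial.aeval (fun j : Fin d => MvPolynomial.psum (Fin n) ℝ ((j : ℕ) + 1)) g = f :=
  unique_powerSum_representation_general (by simpa using hdn) hsym hdeg
end

section
/- The restriction to the canonical Weyl chamber W_c of the Vandermonde map ν : ℝⁿ → ℝⁿ, x ↦ (p_1(x),…,p_n(x)), is a topological embedding; that is, ν restricted to W_c is a homeomorphism onto its image. -/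
/-- The Vandermonde map `ν : ℝⁿ → ℝⁿ`, `x ↦ (p_1(x),…,p_n(x))`. -/
noncomputable def vandermondeMap (n : ℕ) (x : Fin n → ℝ) : Fin n → ℝ :=
  fun j => ∑ i, x i ^ ((j : ℕ) + 1)

/-!
By Newton's identities the power sums `p_1, …, p_n` determine the elementary symmetric functions,
hence the monic polynomial with roots `x_1, …, x_n`, hence `x` up to permutation; so the
Vandermonde map is injective on the Weyl chamber. It is moreover proper on all of `ℝⁿ`, because
`x_i ^ 2 ≤ p_2(x)` when `n ≥ 2` and `x_1 = p_1(x)` when `n = 1`. A proper map that is injective on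
a closed set restricts to a closed embedding of that set.
-/

open Filter Finset

section PowerSums

variable {R σ τ : Type*} [CommRing R] [Fintype σ] [Fintype τ]

theorem natCast_mul_esymm_map_univ (x : σ → R) (k : ℕ) :
    k * (univ.val.map x).esymm k = (-1) ^ (k + 1) *
      ∑ a ∈ antidiagonal k with a.1 < k,
        (-1) ^ a.1 * (univ.val.map x).esymm a.1 * ∑ i, x i ^ a.2 := by
  have newton := congrArg (MvPolynomial.aeval x) (MvPolynomial.mul_esymm_eq_sum σ R k)
  simpa only [map_mul, map_natCast, map_pow, map_neg, map_one, map_sum, MvPolynomial.psum,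
    MvPolynomial.aeval_X, MvPolynomial.aeval_esymm_eq_multiset_esymm] using newton

theorem esymm_map_univ_eq_of_sum_pow_eq [NoZeroDivisors R] [CharZero R] {x : σ → R} {y : τ → R}
    {n : ℕ} (h : ∀ k, 0 < k → k ≤ n → ∑ i, x i ^ k = ∑ j, y j ^ k) {k : ℕ} (hk : k ≤ n) :
    (univ.val.map x).esymm k = (univ.val.map y).esymm k := by
  induction k using Nat.strong_induction_on with
  | _ k ih =>
    obtain rfl | hpos := k.eq_zero_or_pos
    · simp [Multiset.esymm]
    refine mul_left_cancel₀ (Nat.cast_ne_zero.mpr hpos.ne' : (k : R) ≠ 0) ?_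
    rw [natCast_mul_esymm_map_univ, natCast_mul_esymm_map_univ]
    congr 1
    refine sum_congr rfl fun a ha => ?_
    obtain ⟨hsum, hlt⟩ : a.1 + a.2 = k ∧ a.1 < k := by
      simpa only [mem_filter, HasAntidiagonal.mem_antidiagonal] using ha
    rw [ih a.1 hlt (by omega), h a.2 (by omega) (by omega)]

theorem multiset_eq_of_esymm_eq [IsDomain R] {s t : Multiset R} (hcard : s.card = t.card)
    (h : ∀ k ≤ s.card, s.esymm k = t.esymm k) : s = t := by
  rw [← Polynomial.roots_multiset_prod_X_sub_C s, ← Polynomial.roots_multiset_prod_X_sub_C t,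
    Multiset.prod_X_sub_X_eq_sum_esymm, Multiset.prod_X_sub_X_eq_sum_esymm, ← hcard]
  congr 1
  refine sum_congr rfl fun k hk => ?_
  rw [h k (mem_range_succ_iff.mp hk)]

theorem map_univ_eq_of_sum_pow_eq [IsDomain R] [CharZero R] {x : σ → R} {y : τ → R}
    (hcard : Fintype.card σ = Fintype.card τ)
    (h : ∀ k, 0 < k → k ≤ Fintype.card σ → ∑ i, x i ^ k = ∑ j, y j ^ k) :
    univ.val.map x = univ.val.map y :=
  multiset_eq_of_esymm_eq (by simpa using hcard) fun _ hk =>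
    esymm_map_univ_eq_of_sum_pow_eq h (by simpa using hk)

end PowerSums

theorem eq_of_monotone_of_map_univ_eq {α : Type*} [PartialOrder α] {n : ℕ} {x y : Fin n → α}
    (hx : Monotone x) (hy : Monotone y) (h : univ.val.map x = univ.val.map y) : x = y := by
  rw [Fin.univ_val_map, Fin.univ_val_map, Multiset.coe_eq_coe] at h
  exact List.ofFn_injective (h.eq_of_sortedLE hx.sortedLE_ofFn hy.sortedLE_ofFn)

theorem isProperMap_of_norm_le_const_add_norm {E F : Type*} [SeminormedAddCommGroup E]
    [ProperSpace E] [NormedAddCommGroup F] {f : E → F} (hf : Continuous f) (c : ℝ)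
    (h : ∀ x, ‖x‖ ≤ c + ‖f x‖) : IsProperMap f := by
  have hnorm : Tendsto (fun x => ‖f x‖) (cocompact E) atTop :=
    tendsto_atTop_mono (fun x => neg_add_le_iff_le_add.mpr (h x))
      (tendsto_atTop_add_const_left _ (-c) tendsto_norm_cocompact_atTop)
  exact isProperMap_iff_tendsto_cocompact.mpr
    ⟨hf, (tendsto_norm_atTop_iff_cobounded.mp hnorm).mono_right Metric.cobounded_le_cocompact⟩

theorem isClosedEmbedding_domRestrict_of_isProperMap {X Y : Type*} [TopologicalSpace X]
    [TopologicalSpace Y] {f : X → Y} {C : Set X} (hf : IsProperMap f) (hC : IsClosed C)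
    (hinj : Set.InjOn f C) : Topology.IsClosedEmbedding (C.domRestrict f) :=
  have hproper : IsProperMap (C.domRestrict f) := hf.restrict hC
  .of_continuous_injective_isClosedMap hproper.continuous hinj.injective hproper.isClosedMap

theorem injOn_vandermondeMap (n : ℕ) : Set.InjOn (vandermondeMap n) {x | Monotone x} := by
  intro x hx y hy h
  refine eq_of_monotone_of_map_univ_eq hx hy (map_univ_eq_of_sum_pow_eq rfl fun k hpos hk => ?_)
  have hindex : k - 1 < n := by rw [Fintype.card_fin] at hk; omega
  simpa only [vandermondeMap, Nat.sub_add_cancel hpos] using congrFun h ⟨k - 1, hindex⟩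

theorem continuous_vandermondeMap (n : ℕ) : Continuous (vandermondeMap n) := by
  unfold vandermondeMap
  fun_prop

theorem norm_le_one_add_norm_vandermondeMap {n : ℕ} (x : Fin n → ℝ) :
    ‖x‖ ≤ 1 + ‖vandermondeMap n x‖ := by
  refine (pi_norm_le_iff_of_nonneg (by positivity)).mpr fun i => ?_
  obtain rfl | hn : n = 1 ∨ 1 < n := by have := i.pos; omega
  · calc ‖x i‖ = ‖vandermondeMap 1 x i‖ := by simp [vandermondeMap, Subsingleton.elim i 0]
      _ ≤ ‖vandermondeMap 1 x‖ := norm_le_pi_norm _ i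
      _ ≤ 1 + ‖vandermondeMap 1 x‖ := by linarith
  · calc ‖x i‖ ≤ 1 + x i ^ 2 := by
          rw [Real.norm_eq_abs, ← sq_abs]
          nlinarith [sq_nonneg (|x i| - 1)]
      _ ≤ 1 + vandermondeMap n x ⟨1, hn⟩ := by
          gcongr
          exact single_le_sum (f := fun j => x j ^ 2) (fun j _ => sq_nonneg (x j)) (mem_univ i)
      _ ≤ 1 + ‖vandermondeMap n x‖ := by
          gcongr
          exact (Real.le_norm_self _).trans (norm_le_pi_norm _ _)

theorem isProperMap_vandermondeMap (n : ℕ) : IsProperMap (vandermondeMap n) :=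
  isProperMap_of_norm_le_const_add_norm (continuous_vandermondeMap n) 1
    norm_le_one_add_norm_vandermondeMap

theorem isClosedEmbedding_domRestrict_vandermondeMap (n : ℕ) :
    Topology.IsClosedEmbedding
      (Set.domRestrict {x : Fin n → ℝ | Monotone x} (vandermondeMap n)) :=
  isClosedEmbedding_domRestrict_of_isProperMap (isProperMap_vandermondeMap n) isClosed_monotone
    (injOn_vandermondeMap n)

/-- The restriction of the Vandermonde map to the canonical Weyl
chamber `W_c = {x : x_1 ≤ ⋯ ≤ x_n}` is a topological embedding, i.e. a
homeomorphism onto its image. -/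
theorem vandermonde_restrict_isEmbedding (n : ℕ) :
    Topology.IsEmbedding (Set.restrict {x : Fin n → ℝ | Monotone x} (vandermondeMap n)) :=
  (isClosedEmbedding_domRestrict_vandermondeMap n).isEmbedding
end

section
/- Let ℓ be a positive integer and let m_1,…,m_ℓ be positive integers. The weighted Vandermonde map ℝ^ℓ → ℝ^ℓ, x ↦ (Σ_{i=1}^ℓ m_i x_i, Σ_{i=1}^ℓ m_i x_i², …, Σ_{i=1}^ℓ m_i x_i^ℓ), restricted to the set {x ∈ ℝ^ℓ : x_1 ≤ x_2 ≤ ⋯ ≤ x_ℓ}, is a homeomorphism onto its image; in particular it is injective on that set. -/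
/-- The weighted Vandermonde map `x ↦ (p_1^{(m)}(x),…,p_ℓ^{(m)}(x))` with weight
vector `m`, where `p_j^{(m)}(x) = ∑ i, m i * (x i)^j`. -/
noncomputable def weightedVandermondeMap (ℓ : ℕ) (m : Fin ℓ → ℕ) (x : Fin ℓ → ℝ) :
    Fin ℓ → ℝ :=
  fun j => ∑ i, (m i : ℝ) * x i ^ ((j : ℕ) + 1)

/-!
Let `x` and `y` be weakly increasing with the same first `ℓ` weighted power sums. Then
`∑ i, w i * ∫ t in y i..x i, g t = 0` for every polynomial `g` of degree less than `ℓ`. Since the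
intervals between `x i` and `y i` move to the right with `i`, those on which `x i - y i` changes
sign are separated, so `g` can be chosen, with a root at each sign change, to have the sign of
`x i - y i` on the `i`-th interval. All the integrals are then nonnegative, and positive unless
`x i = y i`; hence `x = y`. The map is moreover proper, because the second power sum (the
first, if `ℓ = 1`) bounds every `|x i|`, and a proper injection is a closed embedding.
-/

open Polynomial

/-- The first `n` power sums of `x` with real weights `w`; the coordinate `j : Fin n` holds the
power sum of exponent `j + 1`, as in `weightedVandermondeMap`, which is the case of natural
weights with `ι = Fin n`. -/
noncomputable def weightedPowerSums {ι : Type*} [Fintype ι] (n : ℕ) (w x : ι → ℝ) : Fin n → ℝ :=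
  fun j => ∑ i, w i * x i ^ ((j : ℕ) + 1)

theorem exists_linear_polynomial_sign {a b p : ℝ} (hp : p ≠ 0) (hab : p < 0 → b ≤ a) :
    ∃ f : ℝ[X], f ≠ 0 ∧ f.natDegree ≤ 1 ∧ (∀ t ≤ b, 0 ≤ f.eval t) ∧
      ∀ t, a ≤ t → 0 ≤ p * f.eval t := by
  rcases hp.lt_or_gt with hneg | hpos
  · refine ⟨-(X - C b), neg_ne_zero.2 (X_sub_C_ne_zero b), ?_, fun t ht => ?_, fun t ht => ?_⟩
    · rw [natDegree_neg, natDegree_X_sub_C]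
    · simpa using ht
    · have hbt : b ≤ t := (hab hneg).trans ht
      exact mul_nonneg_of_nonpos_of_nonpos hneg.le (by simpa using hbt)
  · exact ⟨1, one_ne_zero, by simp, fun t _ => by simp, fun t _ => by simpa using hpos.le⟩

/- The case `i = Fin.last n` is the induction invariant: `g` keeps its sign to the right of the
last interval, until a further root is inserted. -/
theorem exists_polynomial_sign_on_intervals {n : ℕ} {a b ε : Fin (n + 1) → ℝ} (ha : Monotone a)
    (hb : Monotone b) (hε : ∀ i, ε i ≠ 0) (hsep : ∀ i j, i < j → ε i * ε j < 0 → b i ≤ a j) :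
    ∃ g : ℝ[X], g ≠ 0 ∧ g.natDegree ≤ n ∧
      ∀ i t, a i ≤ t → (t ≤ b i ∨ i = Fin.last n) → 0 ≤ ε i * g.eval t := by
  induction n with
  | zero =>
    refine ⟨C (ε 0), C_ne_zero.2 (hε 0), (natDegree_C _).le, fun i t _ _ => ?_⟩
    rw [Fin.fin_one_eq_zero i, eval_C]
    exact mul_self_nonneg (ε 0)
  | succ n ih =>
    obtain ⟨g, hg0, hgdeg, hg⟩ := ih (ha.comp Fin.strictMono_castSucc.monotone)
      (hb.comp Fin.strictMono_castSucc.monotone) (fun i => hε i.castSucc)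
      fun i j hij => hsep _ _ (Fin.castSucc_lt_castSucc_iff.2 hij)
    set k := (Fin.last n).castSucc
    set l := Fin.last (n + 1)
    have hkl : k < l := Fin.castSucc_lt_last _
    obtain ⟨f, hf0, hfdeg, hfleft, hfright⟩ :=
      exists_linear_polynomial_sign (mul_ne_zero (hε k) (hε l)) (hsep k l hkl)
    refine ⟨g * f, mul_ne_zero hg0 hf0, natDegree_mul_le.trans (by lia), fun i t hat htb => ?_⟩
    rw [eval_mul]
    cases i using Fin.lastCases with
    | last =>
      have hgt : 0 ≤ ε k * g.eval t := hg (Fin.last n) t ((ha hkl.le).trans hat) (.inr rfl)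
      refine nonneg_of_mul_nonneg_right (a := ε k ^ 2) ?_ (sq_pos_of_ne_zero (hε k))
      calc 0 ≤ (ε k * g.eval t) * (ε k * ε l * f.eval t) := mul_nonneg hgt (hfright t hat)
        _ = ε k ^ 2 * (ε l * (g.eval t * f.eval t)) := by ring
    | cast i =>
      have htb : t ≤ b i.castSucc := htb.resolve_right (Fin.castSucc_lt_last i).ne
      have hik : i.castSucc ≤ k := Fin.castSucc_le_castSucc_iff.2 (Fin.le_last i)
      rw [← mul_assoc]
      exact mul_nonneg (hg i t hat (.inl htb)) (hfleft t (htb.trans (hb hik)))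

theorem exists_polynomial_sign_sub {n : ℕ} {x y : Fin (n + 1) → ℝ} (hx : Monotone x)
    (hy : Monotone y) :
    ∃ g : ℝ[X], g ≠ 0 ∧ g.natDegree ≤ n ∧
      ∀ i, ∀ t ∈ Set.uIcc (y i) (x i), 0 ≤ (x i - y i) * g.eval t := by
  let ε : Fin (n + 1) → ℝ := fun i => if y i ≤ x i then 1 else -1
  have hε : ∀ i, ε i ≠ 0 := fun i => by dsimp only [ε]; split_ifs <;> norm_num
  have hsep : ∀ i j, i < j → ε i * ε j < 0 → y i ⊔ x i ≤ y j ⊓ x j := by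
    intro i j hij hneg
    have hxij := hx hij.le
    have hyij := hy hij.le
    dsimp only [ε] at hneg
    rw [sup_le_iff, le_inf_iff, le_inf_iff]
    split_ifs at hneg <;> grind
  obtain ⟨g, hg0, hgdeg, hg⟩ := exists_polynomial_sign_on_intervals (hy.inf hx) (hy.sup hx) hε hsep
  refine ⟨g, hg0, hgdeg, fun i t ht => ?_⟩
  have habs : x i - y i = |x i - y i| * ε i := by
    dsimp only [ε]
    split_ifs with h
    · rw [abs_of_nonneg (sub_nonneg.2 h), mul_one]
    · rw [abs_of_neg (sub_neg.2 (not_le.1 h)), mul_neg_one, neg_neg]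
  rw [habs, mul_assoc]
  exact mul_nonneg (abs_nonneg _) (hg i t ht.1 (.inl ht.2))

theorem integral_eval_pos {g : ℝ[X]} (hg : g ≠ 0) {a b : ℝ} (hab : a < b)
    (hnonneg : ∀ t ∈ Set.Icc a b, 0 ≤ g.eval t) : 0 < ∫ t in a..b, g.eval t := by
  obtain ⟨c, hc, hgc⟩ : ∃ c ∈ Set.Icc a b, ¬g.IsRoot c := by
    by_contra! hroot
    exact hg (g.eq_zero_of_infinite_isRoot ((Set.Icc_infinite hab).mono hroot))
  exact intervalIntegral.integral_pos hab g.continuousOn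
    (fun t ht => hnonneg t (Set.Ioc_subset_Icc_self ht)) ⟨c, hc, (hnonneg c hc).lt_of_ne' hgc⟩

theorem integral_eval_pos_of_ne {g : ℝ[X]} (hg : g ≠ 0) {a b : ℝ} (hab : a ≠ b)
    (hsign : ∀ t ∈ Set.uIcc a b, 0 ≤ (b - a) * g.eval t) : 0 < ∫ t in a..b, g.eval t := by
  rcases hab.lt_or_gt with hlt | hgt
  · rw [Set.uIcc_of_lt hlt] at hsign
    exact integral_eval_pos hg hlt fun t ht =>
      nonneg_of_mul_nonneg_right (hsign t ht) (sub_pos.2 hlt)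
  · rw [Set.uIcc_of_gt hgt] at hsign
    have hneg : 0 < ∫ t in b..a, (-g).eval t :=
      integral_eval_pos (neg_ne_zero.2 hg) hgt fun t ht => by
        rw [eval_neg, neg_nonneg]
        exact nonpos_of_mul_nonneg_right (hsign t ht) (sub_neg.2 hgt)
    simpa [intervalIntegral.integral_symm a b] using hneg

theorem integral_eval_eq_sum_range {g : ℝ[X]} {n : ℕ} (hg : g.natDegree < n) (a b : ℝ) :
    ∫ t in a..b, g.eval t =
      ∑ j ∈ Finset.range n, g.coeff j * ((b ^ (j + 1) - a ^ (j + 1)) / (j + 1)) := by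
  simp only [eval_eq_sum_range' hg]
  rw [intervalIntegral.integral_finsetSum fun j _ =>
    Continuous.intervalIntegrable (by fun_prop) _ _]
  simp only [intervalIntegral.integral_const_mul, integral_pow]

section PowerSums

variable {ι : Type*} [Fintype ι] {n : ℕ} {w x y : ι → ℝ}

theorem sum_mul_integral_eval_eq_zero (hxy : weightedPowerSums n w x = weightedPowerSums n w y)
    {g : ℝ[X]} (hg : g.natDegree < n) : ∑ i, w i * ∫ t in y i..x i, g.eval t = 0 := by
  have hdiff : ∀ j ∈ Finset.range n, ∑ i, w i * (x i ^ (j + 1) - y i ^ (j + 1)) = 0 := by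
    intro j hj
    simp only [mul_sub, Finset.sum_sub_distrib]
    exact sub_eq_zero.2 (congrFun hxy ⟨j, Finset.mem_range.1 hj⟩)
  calc ∑ i, w i * ∫ t in y i..x i, g.eval t
      = ∑ j ∈ Finset.range n,
          g.coeff j / (j + 1) * ∑ i, w i * (x i ^ (j + 1) - y i ^ (j + 1)) := by
        simp only [integral_eval_eq_sum_range hg, Finset.mul_sum]
        rw [Finset.sum_comm]
        exact Finset.sum_congr rfl fun j _ => Finset.sum_congr rfl fun i _ => by ring
    _ = 0 := Finset.sum_eq_zero fun j hj => by rw [hdiff j hj, mul_zero]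

theorem mul_abs_le_add_norm_weightedPowerSums (hn : Fintype.card ι ≤ n) (hw : ∀ i, 0 ≤ w i)
    (x : ι → ℝ) (i : ι) : w i * |x i| ≤ w i + ‖weightedPowerSums n w x‖ := by
  rcases Nat.lt_or_ge 1 n with h1n | hn1
  · have hsq : w i * x i ^ 2 ≤ ‖weightedPowerSums n w x‖ :=
      calc w i * x i ^ 2 ≤ weightedPowerSums n w x ⟨1, h1n⟩ :=
            Finset.single_le_sum (f := fun i => w i * x i ^ 2)
              (fun i _ => mul_nonneg (hw i) (sq_nonneg _)) (Finset.mem_univ i)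
        _ ≤ ‖weightedPowerSums n w x‖ := (Real.le_norm_self _).trans (norm_le_pi_norm _ _)
    have habs : |x i| ≤ 1 + x i ^ 2 := by
      nlinarith [sq_abs (x i), sq_nonneg (|x i| - 1), sq_nonneg (x i)]
    calc w i * |x i| ≤ w i * (1 + x i ^ 2) := mul_le_mul_of_nonneg_left habs (hw i)
      _ ≤ w i + ‖weightedPowerSums n w x‖ := by linarith
  · have : Subsingleton ι := Fintype.card_le_one_iff_subsingleton.1 (hn.trans hn1)
    have hn0 : 0 < n := (Fintype.card_pos_iff.2 ⟨i⟩).trans_le hn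
    have hsum : weightedPowerSums n w x ⟨0, hn0⟩ = w i * x i := by
      simp [weightedPowerSums, Fintype.sum_subsingleton _ i]
    calc w i * |x i| = ‖weightedPowerSums n w x ⟨0, hn0⟩‖ := by
          rw [hsum, norm_mul, Real.norm_of_nonneg (hw i), Real.norm_eq_abs]
      _ ≤ ‖weightedPowerSums n w x‖ := norm_le_pi_norm _ _
      _ ≤ w i + ‖weightedPowerSums n w x‖ := le_add_of_nonneg_left (hw i)

theorem continuous_weightedPowerSums : Continuous (weightedPowerSums n w) := by
  unfold weightedPowerSums
  fun_prop

theorem isProperMap_weightedPowerSums (hn : Fintype.card ι ≤ n) (hw : ∀ i, 0 < w i) :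
    IsProperMap (weightedPowerSums n w) := by
  refine isProperMap_iff_isCompact_preimage.2 ⟨continuous_weightedPowerSums, fun K hK => ?_⟩
  refine Metric.isCompact_of_isClosed_isBounded
    (hK.isClosed.preimage continuous_weightedPowerSums) ?_
  obtain ⟨R, hR⟩ := hK.isBounded.exists_norm_le
  refine Bornology.forall_isBounded_image_eval_iff.1 fun i => ?_
  refine isBounded_iff_forall_norm_le.2 ⟨(w i + R) / w i, ?_⟩
  rintro _ ⟨x, hx, rfl⟩
  rw [le_div_iff₀' (hw i)]
  exact (mul_abs_le_add_norm_weightedPowerSums hn (fun i => (hw i).le) x i).trans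
    (by gcongr; exact hR _ hx)

end PowerSums

theorem injOn_weightedPowerSums_monotone {ℓ n : ℕ} (hn : ℓ ≤ n) {w : Fin ℓ → ℝ}
    (hw : ∀ i, 0 < w i) : Set.InjOn (weightedPowerSums n w) {x | Monotone x} := by
  intro x hx y hy hxy
  cases ℓ with
  | zero => exact Subsingleton.elim x y
  | succ k =>
    obtain ⟨g, hg0, hgdeg, hg⟩ := exists_polynomial_sign_sub hx hy
    have hpos : ∀ i, x i ≠ y i → 0 < w i * ∫ t in y i..x i, g.eval t := fun i hne =>
      mul_pos (hw i) (integral_eval_pos_of_ne hg0 hne.symm (hg i))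
    have hnonneg : ∀ i, 0 ≤ w i * ∫ t in y i..x i, g.eval t := fun i => by
      rcases eq_or_ne (x i) (y i) with heq | hne
      · simp [heq]
      · exact (hpos i hne).le
    have hsum : ∑ i, w i * ∫ t in y i..x i, g.eval t = 0 :=
      sum_mul_integral_eval_eq_zero hxy (hgdeg.trans_lt hn)
    have hzero := (Fintype.sum_eq_zero_iff_of_nonneg hnonneg).1 hsum
    funext i
    by_contra hne
    exact (hpos i hne).ne' (congrFun hzero i)

theorem weightedVandermonde_restrict_isEmbedding_general {ℓ n : ℕ} (hn : ℓ ≤ n) {w : Fin ℓ → ℝ}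
    (hw : ∀ i, 0 < w i) :
    Topology.IsClosedEmbedding
      ({x : Fin ℓ → ℝ | Monotone x}.domRestrict (weightedPowerSums n w)) := by
  have hproper : IsProperMap ({x : Fin ℓ → ℝ | Monotone x}.domRestrict (weightedPowerSums n w)) :=
    (isProperMap_weightedPowerSums ((Fintype.card_fin ℓ).trans_le hn) hw).restrict
      isClosed_monotone
  exact .of_continuous_injective_isClosedMap hproper.continuous
    (injOn_weightedPowerSums_monotone hn hw).injective hproper.isClosedMap

/-- For positive integer weights `m_1, …, m_ℓ`, the weighted
Vandermonde map restricted to `{x : x_1 ≤ ⋯ ≤ x_ℓ}` is a homeomorphism onto its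
image (a topological embedding); in particular it is injective on that set. -/
theorem weightedVandermonde_restrict_isEmbedding (ℓ : ℕ) (hℓ : 0 < ℓ)
    (m : Fin ℓ → ℕ) (hm : ∀ i, 0 < m i) :
    Topology.IsEmbedding
        (Set.restrict {x : Fin ℓ → ℝ | Monotone x} (weightedVandermondeMap ℓ m)) ∧
      Set.InjOn (weightedVandermondeMap ℓ m) {x : Fin ℓ → ℝ | Monotone x} := by
  have hemb : Topology.IsClosedEmbedding
      ({x : Fin ℓ → ℝ | Monotone x}.domRestrict (weightedVandermondeMap ℓ m)) :=
    weightedVandermonde_restrict_isEmbedding_general le_rfl fun i => Nat.cast_pos.2 (hm i)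
  exact ⟨hemb.isEmbedding, Set.injOn_iff_injective.2 hemb.injective⟩
end

section
/- Let n and d be positive integers with d ≤ n. For every a = (a_1,…,a_d) ∈ ℝ^d, the set V(a) ∩ W_c = {x ∈ ℝⁿ : p_j(x) = a_j for j = 1,…,d, and x_1 ≤ x_2 ≤ ⋯ ≤ x_n} is either empty or contractible. -/
/-!
Count from the largest coordinate. If two antitone tuples share their first `k` power sums, their
difference has at least `k + 1` alternating signs: otherwise some `q` of degree at most `k` has the
opposite sign between `w i` and `u i` for every `i`, and integrating `q` from `w i` to `u i`
contradicts the equality of power sums. Hence the points which do not admit `k + 1` alternating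
moves (the rigid points) are determined by their first `k` power sums and strictly maximize the
next one, while any other point can be moved to increase it, because a tuple of distinct
coordinates is never a local extremum.

So the `k`-rigid points `X k` of the fibre are homeomorphic to the image `Z k` of the fibre under
the first `k` power sums. The projection `Z (k + 1) → Z k` has interval fibres, and maximizing the
last coordinate on them is a continuous section, so `Z (k + 1)` contracts onto `Z k`. Starting from
the single point `Z d`, one reaches the `k` for which every point of the fibre is `k`-rigid.
-/

open Polynomial Topology

/-- The `j`-th power sum in which the coordinate `x i` is counted with multiplicity `μ i`. -/
def weightedPowerSum {ι : Type*} [Fintype ι] (μ : ι → ℝ) (j : ℕ) (x : ι → ℝ) : ℝ :=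
  ∑ i, μ i * x i ^ j

/-- The first `k` weighted power sums; entry `j` is the power sum of degree `j + 1`. -/
def powerSumMap {ι : Type*} [Fintype ι] (μ : ι → ℝ) (k : ℕ) (x : ι → ℝ) : Fin k → ℝ :=
  fun j ↦ weightedPowerSum μ (j + 1) x

/-- The intersection of a weighted Vandermonde variety with the Weyl chamber of antitone tuples.
The decreasing chamber is used because signs are then counted from the largest coordinate, where
the leading coefficient of a polynomial decides. -/
def chamberFiber {ι : Type*} [Fintype ι] [Preorder ι] (μ : ι → ℝ) {d : ℕ} (a : Fin d → ℝ) :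
    Set (ι → ℝ) :=
  {x | Antitone x ∧ powerSumMap μ d x = a}

/-- Along the increasing chain `i` of indices the difference `u - w` is alternately positive and
negative, starting with a positive sign. -/
def IsAlternating {ι : Type*} [Preorder ι] (u w : ι → ℝ) {m : ℕ} (i : Fin m → ι) : Prop :=
  StrictMono i ∧
    ∀ l : Fin m, (Even (l : ℕ) → w (i l) < u (i l)) ∧ (Odd (l : ℕ) → u (i l) < w (i l))

/-- An antitone tuple `x` is `k`-flexible if there are `k + 1` indices which are alternately the
first and the last one of their level set in `x`. Such a tuple can be moved inside the Weyl
chamber, keeping its first `k` power sums and increasing the next one. -/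
def IsFlexible {ι : Type*} [Preorder ι] (k : ℕ) (x : ι → ℝ) : Prop :=
  ∃ r : Fin (k + 1) → ι, StrictMono r ∧
    ∀ l : Fin (k + 1), (Even (l : ℕ) → ∀ q < r l, x (r l) < x q) ∧
      (Odd (l : ℕ) → ∀ q > r l, x q < x (r l))

section PowerSum

variable {ι : Type*} [Fintype ι] {μ : ι → ℝ}

@[fun_prop]
theorem continuous_weightedPowerSum (μ : ι → ℝ) (j : ℕ) : Continuous (weightedPowerSum μ j) := by
  unfold weightedPowerSum
  fun_prop

@[fun_prop]
theorem continuous_powerSumMap (μ : ι → ℝ) (k : ℕ) : Continuous (powerSumMap μ k) :=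
  continuous_pi fun _ ↦ continuous_weightedPowerSum μ _

theorem powerSumMap_eq_iff {k : ℕ} {x y : ι → ℝ} : powerSumMap μ k x = powerSumMap μ k y ↔
    ∀ j < k, weightedPowerSum μ (j + 1) x = weightedPowerSum μ (j + 1) y :=
  funext_iff.trans Fin.forall_iff

theorem powerSumMap_eq_of_le {k m : ℕ} (hkm : k ≤ m) {x y : ι → ℝ}
    (h : powerSumMap μ m x = powerSumMap μ m y) : powerSumMap μ k x = powerSumMap μ k y :=
  powerSumMap_eq_iff.2 fun j hj ↦ powerSumMap_eq_iff.1 h j (hj.trans_le hkm)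

theorem powerSumMap_succ (μ : ι → ℝ) (k : ℕ) (x : ι → ℝ) :
    powerSumMap μ (k + 1) x = Fin.snoc (powerSumMap μ k x) (weightedPowerSum μ (k + 1) x) := by
  refine funext fun j ↦ j.lastCases ?_ fun j ↦ ?_ <;> simp [powerSumMap]

theorem sum_mul_integral_eval_eq (μ u w : ι → ℝ) {q : ℝ[X]} {k : ℕ} (hq : q.natDegree ≤ k) :
    ∑ i, μ i * ∫ z in w i..u i, q.eval z =
      ∑ l ∈ Finset.range (k + 1), q.coeff l / (l + 1) *
        (weightedPowerSum μ (l + 1) u - weightedPowerSum μ (l + 1) w) := by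
  have integral_eq (i : ι) : ∫ z in w i..u i, q.eval z =
      ∑ l ∈ Finset.range (k + 1), q.coeff l * ((u i ^ (l + 1) - w i ^ (l + 1)) / (l + 1)) := by
    simp_rw [Polynomial.eval_eq_sum_range' (Nat.lt_succ_of_le hq)]
    rw [intervalIntegral.integral_finsetSum fun l _ ↦
      (by fun_prop : Continuous fun z : ℝ ↦ q.coeff l * z ^ l).intervalIntegrable _ _]
    simp only [intervalIntegral.integral_const_mul, integral_pow]
  simp_rw [integral_eq, weightedPowerSum, ← Finset.sum_sub_distrib, Finset.mul_sum]
  rw [Finset.sum_comm]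
  exact Finset.sum_congr rfl fun l _ ↦ Finset.sum_congr rfl fun i _ ↦ by ring

end PowerSum

section Alternation

theorem IsAlternating.cons {ι : Type*} [Preorder ι] {u w : ι → ℝ} {m : ℕ} {i : Fin m → ι} {j : ι}
    (hi : IsAlternating w u i) (hj : w j < u j) (hji : ∀ l, j < i l) :
    IsAlternating u w (Fin.cons j i : Fin (m + 1) → ι) := by
  refine ⟨Fin.strictMono_cons.2 ⟨hji, hi.1⟩, fun l ↦ l.cases (by simpa using hj) fun l ↦ ?_⟩
  simpa [Nat.even_add_one, Nat.odd_add_one] using (hi.2 l).symm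

theorem intervalIntegral_neg_of_forall_mul_neg {f : ℝ → ℝ} (hf : Continuous f) {a b : ℝ}
    (hab : a ≠ b) (h : ∀ z ∈ Set.uIoo b a, (b - a) * f z < 0) : ∫ z in a..b, f z < 0 := by
  rcases hab.lt_or_gt with hab | hba
  · rw [Set.uIoo_of_gt hab] at h
    have := intervalIntegral.intervalIntegral_pos_of_pos_on (hf.neg.intervalIntegrable a b)
      (fun z hz ↦ neg_pos.2 (neg_of_mul_neg_right (h z hz) (sub_pos.2 hab).le)) hab
    simpa using this
  · rw [Set.uIoo_of_lt hba] at h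
    have := intervalIntegral.intervalIntegral_pos_of_pos_on (hf.intervalIntegrable b a)
      (fun z hz ↦ pos_of_mul_neg_right (h z hz) (sub_neg.2 hba).le) hba
    rw [intervalIntegral.integral_symm]
    exact neg_neg_of_pos this

theorem exists_monic_of_forall_not_isAlternating {ι : Type*} [LinearOrder ι] [WellFoundedLT ι]
    {u w : ι → ℝ} (hu : Antitone u) (hw : Antitone w) {m : ℕ}
    (h : ∀ i : Fin m → ι, ¬IsAlternating u w i) {B : ℝ} (huB : ∀ j, u j ≤ B) :
    ∃ q : ℝ[X], q.Monic ∧ q.natDegree < m ∧ (∀ z > B, 0 < q.eval z) ∧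
      ∀ j, ∀ z ∈ Set.uIoo (u j) (w j), (u j - w j) * q.eval z < 0 := by
  induction m generalizing ι B with
  | zero => exact (h Fin.elim0 ⟨fun l ↦ l.elim0, fun l ↦ l.elim0⟩).elim
  | succ m ih =>
    by_cases! hle : ∀ j, u j ≤ w j
    · refine ⟨1, monic_one, by simp, by simp, fun j z hz ↦ ?_⟩
      rw [Set.uIoo_of_le (hle j)] at hz
      simpa using hz.1.trans hz.2
    -- `u - w` changes sign at `u j₀` for the first time; beyond `j₀`, `u` and `w` swap roles.
    obtain ⟨j₀, hj₀ : w j₀ < u j₀, hmin⟩ := WellFounded.has_min wellFounded_lt _ hle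
    have not_isAlternating_tail (i : Fin m → Set.Ici j₀) :
        ¬IsAlternating (fun j : Set.Ici j₀ ↦ w j) (fun j ↦ u j) i := fun hi ↦ by
      refine h _ (IsAlternating.cons (i := fun l ↦ (i l : ι)) hi hj₀ fun l ↦ ?_)
      have zero_mem : 0 < m := l.pos
      have ne : (i ⟨0, zero_mem⟩ : ι) ≠ j₀ := fun heq ↦
        lt_asymm hj₀ (by simpa [heq] using hi.2 ⟨0, zero_mem⟩)
      exact ((i _).2.lt_of_ne' ne).trans_le (hi.1.monotone (Nat.zero_le l))
    obtain ⟨q, hmonic, hdeg, hpos, hsign⟩ := ih (ι := Set.Ici j₀) (B := u j₀)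
      (fun _ _ hij ↦ hw hij) (fun _ _ hij ↦ hu hij) not_isAlternating_tail
      fun j ↦ (hw j.2).trans hj₀.le
    refine ⟨(X - C (u j₀)) * q, (monic_X_sub_C _).mul hmonic, ?_, fun z hz ↦ ?_, fun j z hz ↦ ?_⟩
    · rw [(monic_X_sub_C _).natDegree_mul hmonic, natDegree_X_sub_C]
      omega
    · have := (huB j₀).trans_lt hz
      simpa using mul_pos (sub_pos.2 this) (hpos z this)
    simp only [eval_mul, eval_sub, eval_X, eval_C]
    rcases le_or_gt j₀ j with hj | hj
    · have z_lt : z < u j₀ := hz.2.trans_le (sup_le (hu hj) ((hw hj).trans hj₀.le))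
      have := hsign ⟨j, hj⟩ z (Set.uIoo_comm (u j) (w j) ▸ hz)
      linarith [mul_neg_of_pos_of_neg (sub_pos.2 z_lt) this]
    · rw [Set.uIoo_of_le (not_lt.1 fun hlt ↦ hmin j hlt hj)] at hz
      have lt_z : u j₀ < z := (hu hj.le).trans_lt hz.1
      exact mul_neg_of_neg_of_pos (sub_neg.2 (hz.1.trans hz.2))
        (mul_pos (sub_pos.2 lt_z) (hpos z lt_z))

theorem exists_isAlternating {ι : Type*} [Fintype ι] [LinearOrder ι] {μ : ι → ℝ}
    (hμ : ∀ i, 0 < μ i) {k : ℕ} {u w : ι → ℝ} (hu : Antitone u) (hw : Antitone w) (huw : u ≠ w)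
    (hpow : powerSumMap μ k u = powerSumMap μ k w)
    (hle : weightedPowerSum μ (k + 1) w ≤ weightedPowerSum μ (k + 1) u) :
    ∃ i : Fin (k + 1) → ι, IsAlternating u w i := by
  by_contra! h
  obtain ⟨B, hB⟩ := (Set.finite_range u).bddAbove
  obtain ⟨q, hmonic, hdeg, -, hsign⟩ := exists_monic_of_forall_not_isAlternating hu hw h
    fun j ↦ hB (Set.mem_range_self j)
  have hdeg : q.natDegree ≤ k := Nat.le_of_lt_succ hdeg
  have coeff_nonneg : 0 ≤ q.coeff k := by
    obtain rfl | hlt := hdeg.eq_or_lt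
    · simp [hmonic.coeff_natDegree]
    · rw [coeff_eq_zero_of_natDegree_lt hlt]
  have neg : ∑ i, μ i * ∫ z in w i..u i, q.eval z < 0 := by
    obtain ⟨j, hj⟩ := Function.ne_iff.1 huw
    have neg_of_ne (i : ι) (hi : u i ≠ w i) : μ i * ∫ z in w i..u i, q.eval z < 0 :=
      mul_neg_of_pos_of_neg (hμ i)
        (intervalIntegral_neg_of_forall_mul_neg q.continuous hi.symm (hsign i))
    refine Finset.sum_neg' (fun i _ ↦ ?_) ⟨j, Finset.mem_univ j, neg_of_ne j hj⟩
    obtain hi | hi := eq_or_ne (u i) (w i)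
    · simp [hi]
    · exact (neg_of_ne i hi).le
  rw [sum_mul_integral_eval_eq μ u w hdeg, Finset.sum_range_succ, Finset.sum_eq_zero, zero_add]
    at neg
  · exact neg.not_ge (mul_nonneg (div_nonneg coeff_nonneg (by positivity)) (sub_nonneg.2 hle))
  · intro l hl
    rw [powerSumMap_eq_iff.1 hpow l (Finset.mem_range.1 hl), sub_self, mul_zero]

end Alternation

section Rigidity

theorem exists_first_of_level {ι : Type*} [LinearOrder ι] [WellFoundedLT ι] {x : ι → ℝ}
    (hx : Antitone x) (i : ι) : ∃ a ≤ i, x a = x i ∧ ∀ q < a, x a < x q := by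
  obtain ⟨a, ha : x a = x i, hmin⟩ :=
    WellFounded.has_min wellFounded_lt {a | x a = x i} ⟨i, rfl⟩
  exact ⟨a, not_lt.1 (hmin i rfl), ha, fun q hq ↦
    (hx hq.le).lt_of_ne fun heq ↦ hmin q (heq.symm.trans ha) hq⟩

theorem exists_last_of_level {ι : Type*} [LinearOrder ι] [WellFoundedGT ι] {x : ι → ℝ}
    (hx : Antitone x) (i : ι) : ∃ b ≥ i, x b = x i ∧ ∀ q > b, x q < x b := by
  obtain ⟨b, hb : x b = x i, hmax⟩ :=
    WellFounded.has_min wellFounded_gt {b | x b = x i} ⟨i, rfl⟩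
  exact ⟨b, not_lt.1 (hmax i rfl), hb, fun q hq ↦
    (hx hq.le).lt_of_ne fun heq ↦ hmax q (heq.trans hb) hq⟩

theorem IsAlternating.isFlexible {ι : Type*} [LinearOrder ι] [Finite ι] {x y : ι → ℝ}
    (hx : Antitone x) (hy : Antitone y) {k : ℕ} {i : Fin (k + 1) → ι}
    (hi : IsAlternating y x i) : IsFlexible k x := by
  choose first first_le x_first first_lt using exists_first_of_level hx
  choose last le_last x_last lt_last using exists_last_of_level hx
  refine ⟨fun l ↦ if Even (l : ℕ) then first (i l) else last (i l),
    Fin.strictMono_iff_lt_succ.2 fun l ↦ ?_, fun l ↦ ⟨fun hl ↦ ?_, fun hl ↦ ?_⟩⟩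
  · have i_lt : i l.castSucc < i l.succ := hi.1 Fin.castSucc_lt_succ
    obtain hl | hl := Nat.even_or_odd (l : ℕ)
    · simpa [hl, Nat.even_add_one] using (first_le _).trans_lt (i_lt.trans_le (le_last _))
    · have x_lt : x (i l.succ) < x (i l.castSucc) :=
        calc x (i l.succ) < y (i l.succ) := (hi.2 l.succ).1 (by simpa [Nat.even_add_one] using hl)
          _ ≤ y (i l.castSucc) := hy i_lt.le
          _ < x (i l.castSucc) := (hi.2 l.castSucc).2 hl
      have := hx.reflect_lt ((x_first _).trans_lt (x_lt.trans_eq (x_last _).symm))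
      simpa [Nat.not_even_iff_odd.2 hl, Nat.even_add_one] using this
  · simpa [hl] using first_lt (i l)
  · simpa [Nat.not_even_iff_odd.2 hl] using lt_last (i l)

theorem IsFlexible.mono {ι : Type*} [Preorder ι] {k m : ℕ} (hkm : k ≤ m) {x : ι → ℝ}
    (hx : IsFlexible m x) : IsFlexible k x := by
  obtain ⟨r, hr, hrx⟩ := hx
  exact ⟨r ∘ Fin.castLE (by omega), hr.comp (Fin.strictMono_castLE _), fun l ↦
    hrx (Fin.castLE (by omega) l)⟩

theorem not_isFlexible_of_card_le {ι : Type*} [Preorder ι] [Fintype ι] {k : ℕ}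
    (hk : Fintype.card ι ≤ k) (x : ι → ℝ) : ¬IsFlexible k x := by
  rintro ⟨r, hr, -⟩
  have := Fintype.card_le_of_injective r hr.injective
  rw [Fintype.card_fin] at this
  omega

theorem isOpen_setOf_isFlexible {ι : Type*} [Preorder ι] [Finite ι] (k : ℕ) :
    IsOpen {x : ι → ℝ | IsFlexible k x} := by
  simp only [IsFlexible, Set.ofPred_exists, Set.ofPred_and, Set.ofPred_forall]
  refine isOpen_iUnion fun r ↦ isOpen_const.inter (isOpen_iInter_of_finite fun l ↦ ?_)
  refine .inter ?_ ?_ <;>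
  exact isOpen_iInter_of_finite fun _ ↦ isOpen_iInter_of_finite fun q ↦
    isOpen_iInter_of_finite fun _ ↦ isOpen_lt (continuous_apply _) (continuous_apply _)

variable {ι : Type*} [Fintype ι] [LinearOrder ι] {μ : ι → ℝ} {k : ℕ} {x y : ι → ℝ}

theorem weightedPowerSum_lt_of_not_isFlexible (hμ : ∀ i, 0 < μ i) (hx : Antitone x)
    (hy : Antitone y) (hyx : y ≠ x) (hpow : powerSumMap μ k y = powerSumMap μ k x)
    (hrigid : ¬IsFlexible k x) :
    weightedPowerSum μ (k + 1) y < weightedPowerSum μ (k + 1) x := by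
  by_contra! hle
  obtain ⟨i, hi⟩ := exists_isAlternating hμ hy hx hyx hpow hle
  exact hrigid (hi.isFlexible hx hy)

theorem eq_of_not_isFlexible (hμ : ∀ i, 0 < μ i) (hx : Antitone x) (hy : Antitone y)
    (hpow : powerSumMap μ k y = powerSumMap μ k x) (hrigidx : ¬IsFlexible k x)
    (hrigidy : ¬IsFlexible k y) : y = x := by
  by_contra hyx
  exact (weightedPowerSum_lt_of_not_isFlexible hμ hx hy hyx hpow hrigidx).asymm
    (weightedPowerSum_lt_of_not_isFlexible hμ hy hx (Ne.symm hyx) hpow.symm hrigidy)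

end Rigidity

section Moving

variable {k : ℕ} {μ u v w : Fin (k + 1) → ℝ}

theorem isAlternating_id (hμ : ∀ i, 0 < μ i) (hu : Antitone u) (hw : Antitone w) (huw : u ≠ w)
    (hpow : powerSumMap μ k u = powerSumMap μ k w)
    (hle : weightedPowerSum μ (k + 1) w ≤ weightedPowerSum μ (k + 1) u) :
    IsAlternating u w id := by
  obtain ⟨i, hi⟩ := exists_isAlternating hμ hu hw huw hpow hle
  have : i = id := funext fun l ↦ le_antisymm hi.1.apply_le hi.1.le_apply
  rwa [this] at hi

theorem weightedPowerSum_lt_of_le (hμ : ∀ i, 0 < μ i) (hu : Antitone u) (hw : Antitone w)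
    (huw : u ≠ w) (hpow : powerSumMap μ k u = powerSumMap μ k w)
    (hle : weightedPowerSum μ (k + 1) w ≤ weightedPowerSum μ (k + 1) u) :
    weightedPowerSum μ (k + 1) w < weightedPowerSum μ (k + 1) u := by
  refine hle.lt_of_ne fun heq ↦ ?_
  have pos := ((isAlternating_id hμ hu hw huw hpow hle).2 0).1 (by simp)
  have neg := ((isAlternating_id hμ hw hu huw.symm hpow.symm heq.ge).2 0).1 (by simp)
  exact pos.asymm neg

theorem hasStrictFDerivAt_weightedPowerSum {ι : Type*} [Fintype ι] (μ : ι → ℝ) (j : ℕ)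
    (x : ι → ℝ) : HasStrictFDerivAt (weightedPowerSum μ (j + 1))
      (∑ i, (μ i * ((j + 1) * x i ^ j)) • ContinuousLinearMap.proj (R := ℝ) (φ := fun _ ↦ ℝ) i)
      x := by
  unfold weightedPowerSum
  refine HasStrictFDerivAt.fun_sum fun i _ ↦ ?_
  have := (((hasStrictFDerivAt_apply (𝕜 := ℝ) i x).pow (j + 1)).const_mul (μ i))
  simpa [smul_smul] using this

theorem not_isLocalExtrOn_weightedPowerSum (hμ : ∀ i, μ i ≠ 0) (hu : Function.Injective u) :
    ¬IsLocalExtrOn (weightedPowerSum μ (k + 1))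
      {v | powerSumMap μ k v = powerSumMap μ k u} u := by
  intro hextr
  simp only [funext_iff] at hextr
  obtain ⟨Λ, Λ₀, hΛ, hsum⟩ := hextr.exists_multipliers_of_hasStrictFDerivAt
    (fun j ↦ hasStrictFDerivAt_weightedPowerSum μ j u) (hasStrictFDerivAt_weightedPowerSum μ k u)
  have vanish (i : Fin (k + 1)) : ∑ l : Fin (k + 1),
      (Fin.snoc (α := fun _ ↦ ℝ) Λ Λ₀ l * (l + 1)) * u i ^ (l : ℕ) = 0 := by
    have partial_eq := congr($hsum (Pi.single i 1))
    simp only [add_apply, sum_apply, smul_apply, ContinuousLinearMap.proj_apply, Pi.single_apply,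
      smul_eq_mul, mul_ite, mul_one, mul_zero, Finset.sum_ite_eq', Finset.mem_univ, if_true,
      zero_apply] at partial_eq
    refine (mul_eq_zero.1 ?_).resolve_left (hμ i)
    rw [Fin.sum_univ_castSucc, mul_add, Finset.mul_sum, ← partial_eq]
    simp only [Fin.snoc_castSucc, Fin.snoc_last, Fin.val_castSucc, Fin.val_last]
    exact congr_arg₂ _ (Finset.sum_congr rfl fun l _ ↦ by ring) (by ring)
  have snoc_eq_zero (l : Fin (k + 1)) : Fin.snoc (α := fun _ ↦ ℝ) Λ Λ₀ l = 0 :=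
    (mul_eq_zero.1 (congr_fun (Matrix.eq_zero_of_forall_index_sum_mul_pow_eq_zero hu vanish) l)
      ).resolve_right (by positivity)
  exact hΛ (Prod.ext (funext fun l ↦ by simpa using snoc_eq_zero l.castSucc)
    (by simpa using snoc_eq_zero (Fin.last k)))

theorem isOpen_setOf_strictAnti : IsOpen {v : Fin (k + 1) → ℝ | StrictAnti v} := by
  simp only [Fin.strictAnti_iff_succ_lt, Set.ofPred_forall]
  exact isOpen_iInter_of_finite fun i ↦ isOpen_lt (continuous_apply _) (continuous_apply _)

theorem mem_closure_strictAnti {m : ℕ} {w : Fin m → ℝ} (hw : Antitone w) :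
    w ∈ closure {v : Fin m → ℝ | StrictAnti v} := by
  have tendsto : Filter.Tendsto (fun (t : ℝ) i ↦ w i - t * (i : ℕ)) (𝓝[>] 0) (𝓝 w) := by
    refine tendsto_nhdsWithin_of_tendsto_nhds (Continuous.tendsto' ?_ _ _ (by simp))
    fun_prop
  refine mem_closure_of_tendsto tendsto (eventually_mem_nhdsWithin.mono fun t ht i j hij ↦ ?_)
  have : (i : ℝ) < (j : ℝ) := by exact_mod_cast hij
  linarith [hw hij.le, mul_lt_mul_of_pos_left this ht]

theorem exists_mem_sphere_of_strictAnti (hμ : ∀ i, 0 < μ i) {ε : ℝ}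
    (hgap : ∀ i j : Fin (k + 1), i < j → Odd (i : ℕ) → w j + 2 * ε < w i) (hv : StrictAnti v)
    (hvw : v ∈ Metric.closedBall w ε) :
    ∃ u ∈ Metric.sphere w ε, Antitone u ∧ powerSumMap μ k u = powerSumMap μ k v ∧
      weightedPowerSum μ (k + 1) v ≤ weightedPowerSum μ (k + 1) u := by
  have compact : IsCompact (Metric.closedBall w ε ∩
      ({u | Antitone u} ∩ {u | powerSumMap μ k u = powerSumMap μ k v})) :=
    (isCompact_closedBall w ε).inter_right (isClosed_antitone.inter
      (isClosed_eq (continuous_powerSumMap μ k) continuous_const))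
  obtain ⟨u, ⟨hball, hu, hpow⟩, hmax⟩ := compact.exists_isMaxOn ⟨v, hvw, hv.antitone, rfl⟩
    (continuous_weightedPowerSum μ (k + 1)).continuousOn
  have hle : weightedPowerSum μ (k + 1) v ≤ weightedPowerSum μ (k + 1) u :=
    hmax ⟨hvw, hv.antitone, rfl⟩
  refine ⟨u, ?_, hu, hpow, hle⟩
  -- Inside the ball, `u` would be strictly antitone, but local extrema have repeated coordinates.
  by_contra hsphere
  have interior : u ∈ Metric.ball w ε := Metric.mem_ball.2 (hball.lt_of_ne hsphere)
  have hstrict : StrictAnti u := by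
    refine Fin.strictAnti_iff_succ_lt.2 fun i ↦ ?_
    obtain rfl | hne := eq_or_ne u v
    · exact hv Fin.castSucc_lt_succ
    obtain hi | hi := Nat.even_or_odd (i : ℕ)
    · have halt := (isAlternating_id hμ hu hv.antitone hne hpow hle).2
      calc u i.succ < v i.succ := (halt i.succ).2 (by simpa [Nat.odd_add_one] using hi)
        _ ≤ v i.castSucc := hv.antitone Fin.castSucc_lt_succ.le
        _ < u i.castSucc := (halt i.castSucc).1 hi
    · have h₁ := abs_le.1 ((dist_pi_le_iff (dist_nonneg.trans hball)).1 hball i.succ)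
      have h₂ := abs_le.1 ((dist_pi_le_iff (dist_nonneg.trans hball)).1 hball i.castSucc)
      linarith [hgap _ _ (Fin.castSucc_lt_succ (i := i)) hi]
  refine not_isLocalExtrOn_weightedPowerSum (fun i ↦ (hμ i).ne') hstrict.injective (.inr ?_)
  filter_upwards [nhdsWithin_le_nhds (Metric.isOpen_ball.mem_nhds interior),
    nhdsWithin_le_nhds (isOpen_setOf_strictAnti.mem_nhds hstrict), self_mem_nhdsWithin]
    with y hyball hystrict hypow
  exact hmax ⟨Metric.ball_subset_closedBall hyball, StrictAnti.antitone hystrict,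
    hypow.trans hpow⟩

theorem exists_mem_sphere_of_antitone (hμ : ∀ i, 0 < μ i) (hw : Antitone w) {ε : ℝ} (hε : 0 < ε)
    (hgap : ∀ i j : Fin (k + 1), i < j → Odd (i : ℕ) → w j + 2 * ε < w i) :
    ∃ u ∈ Metric.sphere w ε, Antitone u ∧ powerSumMap μ k u = powerSumMap μ k w ∧
      weightedPowerSum μ (k + 1) w ≤ weightedPowerSum μ (k + 1) u := by
  let S : Set (Metric.sphere w ε × (Fin (k + 1) → ℝ)) :=
    {p | Antitone p.1.1 ∧ powerSumMap μ k p.1 = powerSumMap μ k p.2 ∧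
      weightedPowerSum μ (k + 1) p.2 ≤ weightedPowerSum μ (k + 1) p.1}
  have continuous_val : Continuous fun p : Metric.sphere w ε × (Fin (k + 1) → ℝ) ↦ p.1.1 :=
    continuous_subtype_val.comp continuous_fst
  have isClosed_S : IsClosed S :=
    (isClosed_antitone.preimage continuous_val).inter <| .inter
      (isClosed_eq ((continuous_powerSumMap μ k).comp continuous_val)
        ((continuous_powerSumMap μ k).comp continuous_snd))
      (isClosed_le ((continuous_weightedPowerSum μ _).comp continuous_snd)
        ((continuous_weightedPowerSum μ _).comp continuous_val))
  have frequently_mem : ∃ᶠ v in 𝓝 w, v ∈ Prod.snd '' S := by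
    refine ((mem_closure_iff_frequently.1 (mem_closure_strictAnti hw)).and_eventually
      (Metric.closedBall_mem_nhds w hε)).mono fun v ⟨hv, hvw⟩ ↦ ?_
    obtain ⟨u, huw, hu⟩ := exists_mem_sphere_of_strictAnti hμ hgap hv hvw
    exact ⟨(⟨u, huw⟩, v), hu, rfl⟩
  obtain ⟨⟨u, v⟩, ⟨hu, hpow, hle⟩, rfl : v = w⟩ :=
    (isClosedMap_snd_of_compactSpace S isClosed_S).mem_of_frequently_of_tendsto frequently_mem
      Filter.tendsto_id
  exact ⟨u, u.2, hu, hpow, hle⟩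

theorem exists_alternating_move (hμ : ∀ i, 0 < μ i) (hw : Antitone w) {ε : ℝ} (hε : 0 < ε)
    (hgap : ∀ i j : Fin (k + 1), i < j → Odd (i : ℕ) → w j + 2 * ε < w i) :
    ∃ u ∈ Metric.closedBall w ε, powerSumMap μ k u = powerSumMap μ k w ∧
      weightedPowerSum μ (k + 1) w < weightedPowerSum μ (k + 1) u ∧ IsAlternating u w id := by
  obtain ⟨u, huw, hu, hpow, hle⟩ := exists_mem_sphere_of_antitone hμ hw hε hgap
  have hne : u ≠ w := Metric.ne_of_mem_sphere huw hε.ne'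
  exact ⟨u, Metric.sphere_subset_closedBall huw, hpow,
    weightedPowerSum_lt_of_le hμ hu hw hne hpow hle, isAlternating_id hμ hu hw hne hpow hle⟩

end Moving

section Flexibility

theorem antitone_of_perturbation {ι : Type*} [LinearOrder ι] {x y : ι → ℝ} (hx : Antitone x)
    {δ : ℝ} (hδ : ∀ i, |y i - x i| ≤ δ) (hdown : ∀ p, y p < x p → ∀ q > p, x q + 2 * δ < x p)
    (hup : ∀ q, x q < y q → ∀ p < q, x q + 2 * δ < x p) : Antitone y := by
  refine antitone_iff_forall_lt.2 fun p q hpq ↦ ?_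
  have hp := abs_le.1 (hδ p)
  have hq := abs_le.1 (hδ q)
  by_cases! h : y p < x p ∨ x q < y q
  · have := h.elim (hdown p · q hpq) (hup q · p hpq)
    linarith
  · exact h.2.trans ((hx hpq.le).trans h.1)

theorem eventually_forall_add_lt {ι : Type*} [Finite ι] (x : ι → ℝ) :
    ∀ᶠ δ in 𝓝 (0 : ℝ), ∀ p q, x q < x p → x q + 2 * δ < x p := by
  refine Filter.eventually_all.2 fun p ↦ Filter.eventually_all.2 fun q ↦
    Filter.eventually_imp_distrib_left.2 fun h ↦ ?_
  have continuous_add : Continuous fun δ : ℝ ↦ x q + 2 * δ := by fun_prop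
  exact continuous_add.tendsto' 0 (x q) (by simp) |>.eventually_lt_const h

variable {ι κ : Type*} [Fintype ι] {μ : ι → ℝ}

theorem weightedPowerSum_extend_sub [Fintype κ] {r : κ → ι} (hr : Function.Injective r) (j : ℕ)
    (u : κ → ℝ) (x : ι → ℝ) :
    weightedPowerSum μ j (Function.extend r u x) - weightedPowerSum μ j x =
      weightedPowerSum (μ ∘ r) j u - weightedPowerSum (μ ∘ r) j (x ∘ r) := by
  simp only [weightedPowerSum, ← Finset.sum_sub_distrib]
  refine (Fintype.sum_of_injective r hr _ _ (fun i hi ↦ ?_) fun l ↦ ?_).symm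
  · rw [Function.extend_apply' _ _ _ hi, sub_self]
  · simp [hr.extend_apply]

variable [LinearOrder ι] {k : ℕ} {x : ι → ℝ}

theorem IsFlexible.exists_move (hμ : ∀ i, 0 < μ i) (hx : Antitone x) (hflex : IsFlexible k x)
    {δ : ℝ} (hδ : 0 < δ) (hgap : ∀ p q, x q < x p → x q + 2 * δ < x p) :
    ∃ y ∈ Metric.closedBall x δ, Antitone y ∧ powerSumMap μ k y = powerSumMap μ k x ∧
      weightedPowerSum μ (k + 1) x < weightedPowerSum μ (k + 1) y := by
  obtain ⟨r, hr, hrx⟩ := hflex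
  obtain ⟨u, hu, hpow, hlt, -, halt⟩ := exists_alternating_move (μ := μ ∘ r) (fun l ↦ hμ (r l))
    (hx.comp_monotone hr.monotone) hδ fun l m hlm hl ↦ hgap _ _ ((hrx l).2 hl _ (hr hlm))
  have extend_sub (j : ℕ) := weightedPowerSum_extend_sub (μ := μ) hr.injective j u x
  have apply_selected (l : Fin (k + 1)) : Function.extend r u x (r l) = u l :=
    hr.injective.extend_apply u x l
  have apply_other {i : ι} (hi : ¬∃ l, r l = i) : Function.extend r u x i = x i :=
    Function.extend_apply' u x i hi
  have dist_le (i : ι) : |Function.extend r u x i - x i| ≤ δ := by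
    by_cases hi : ∃ l, r l = i
    · obtain ⟨l, rfl⟩ := hi
      rw [apply_selected]
      exact (dist_pi_le_iff hδ.le).1 hu l
    · simp [apply_other hi, hδ.le]
  refine ⟨Function.extend r u x, (dist_pi_le_iff hδ.le).2 dist_le,
    antitone_of_perturbation hx dist_le (fun p hp q hpq ↦ ?_) (fun q hq p hpq ↦ ?_),
    powerSumMap_eq_iff.2 fun j hj ↦ ?_, ?_⟩
  · obtain ⟨l, rfl⟩ : ∃ l, r l = p := by_contra fun h ↦ (apply_other h ▸ hp).false
    rw [apply_selected] at hp
    have odd : Odd (l : ℕ) := Nat.not_even_iff_odd.1 fun hl ↦ hp.asymm ((halt l).1 hl)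
    exact hgap _ _ ((hrx l).2 odd q hpq)
  · obtain ⟨l, rfl⟩ : ∃ l, r l = q := by_contra fun h ↦ (apply_other h ▸ hq).false
    rw [apply_selected] at hq
    have even : Even (l : ℕ) := Nat.not_odd_iff_even.1 fun hl ↦ hq.asymm ((halt l).2 hl)
    exact hgap _ _ ((hrx l).1 even p hpq)
  · linarith [extend_sub (j + 1), powerSumMap_eq_iff.1 hpow j hj]
  · linarith [extend_sub (k + 1)]

theorem IsFlexible.not_isLocalMaxOn (hμ : ∀ i, 0 < μ i) (hx : Antitone x)
    (hflex : IsFlexible k x) : ¬IsLocalMaxOn (weightedPowerSum μ (k + 1))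
      (chamberFiber μ (powerSumMap μ k x)) x := by
  intro hmax
  obtain ⟨η, hη, hball⟩ := Metric.mem_nhdsWithin_iff.1 hmax
  obtain ⟨δ, ⟨hgap, hδη⟩, hδ⟩ := (((eventually_forall_add_lt x).and
    (eventually_lt_nhds hη)).filter_mono nhdsWithin_le_nhds |>.and
      (self_mem_nhdsWithin (s := Set.Ioi 0))).exists
  obtain ⟨y, hyx, hy, hpow, hlt⟩ := hflex.exists_move hμ hx hδ hgap
  exact hlt.not_ge (hball ⟨Metric.closedBall_subset_ball hδη hyx, hy, hpow⟩)

end Flexibility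

theorem contractibleSpace_of_segment_subset {E Y : Type*} [AddCommGroup E] [Module ℝ E]
    [TopologicalSpace E] [IsTopologicalAddGroup E] [ContinuousSMul ℝ E] [TopologicalSpace Y]
    [ContractibleSpace Y] {Z : Set E} (f : C(Z, Y)) (g : C(Y, Z))
    (h : ∀ z, segment ℝ (g (f z) : E) z ⊆ Z) : ContractibleSpace Z := by
  let H : ContinuousMap.Homotopy (g.comp f) (ContinuousMap.id Z) :=
    { toFun := fun p ↦ ⟨AffineMap.lineMap (g (f p.2) : E) (p.2 : E) (p.1 : ℝ),
        h p.2 (by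
          rw [segment_eq_image_lineMap]
          exact Set.mem_image_of_mem _ p.1.2)⟩
      continuous_toFun := by
        simp only [AffineMap.lineMap_apply_module]
        fun_prop
      map_zero_left := fun z ↦ by simp
      map_one_left := fun z ↦ by simp }
  rw [contractible_iff_id_nullhomotopic]
  obtain ⟨z, hz⟩ := ((id_nullhomotopic Y).comp_left f).comp_right g
  exact ⟨z, .trans ⟨H.symm⟩ hz⟩

section Fiber

variable {ι : Type*} [Fintype ι] [Preorder ι] {μ : ι → ℝ} {d : ℕ}

theorem isClosed_chamberFiber (μ : ι → ℝ) (a : Fin d → ℝ) : IsClosed (chamberFiber μ a) :=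
  isClosed_antitone.inter (isClosed_eq (continuous_powerSumMap μ d) continuous_const)

theorem isCompact_chamberFiber (hμ : ∀ i, 0 < μ i) (hd : 2 ≤ d) (a : Fin d → ℝ) :
    IsCompact (chamberFiber μ a) := by
  refine (isCompact_univ_pi fun i ↦ isCompact_Icc (a := -√(a ⟨1, hd⟩ / μ i))
    (b := √(a ⟨1, hd⟩ / μ i))).of_isClosed_subset (isClosed_chamberFiber μ a) fun x hx i _ ↦ ?_
  refine abs_le.1 (Real.abs_le_sqrt ((le_div_iff₀' (hμ i)).2 ?_))
  rw [← hx.2]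
  exact Finset.single_le_sum (f := fun i ↦ μ i * x i ^ 2)
    (fun j _ ↦ mul_nonneg (hμ j).le (sq_nonneg _)) (Finset.mem_univ i)

theorem convex_chamberFiber (hd : d ≤ 1) (a : Fin d → ℝ) : Convex ℝ (chamberFiber μ a) := by
  rintro x ⟨hx, hxa⟩ y ⟨hy, hya⟩ s t hs ht hst
  refine ⟨(hx.const_mul hs).add (hy.const_mul ht), funext fun j ↦ ?_⟩
  have hj : (j : ℕ) = 0 := by omega
  have hxj := congr_fun hxa j
  have hyj := congr_fun hya j
  simp only [powerSumMap, weightedPowerSum, hj, zero_add, pow_one] at hxj hyj ⊢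
  calc ∑ i, μ i * (s • x + t • y) i = s * ∑ i, μ i * x i + t * ∑ i, μ i * y i := by
        simp only [Finset.mul_sum, ← Finset.sum_add_distrib, Pi.add_apply, Pi.smul_apply,
          smul_eq_mul]
        exact Finset.sum_congr rfl fun i _ ↦ by ring
    _ = a j := by rw [hxj, hyj, ← add_mul, hst, one_mul]

end Fiber

section IntermediateValue

variable {ι : Type*} [Fintype ι] [LinearOrder ι] {μ : ι → ℝ}

theorem exists_not_isFlexible (hμ : ∀ i, 0 < μ i) {k : ℕ} (hk : 2 ≤ k) {x : ι → ℝ}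
    (hx : Antitone x) :
    ∃ y, Antitone y ∧ powerSumMap μ k y = powerSumMap μ k x ∧ ¬IsFlexible k y := by
  obtain ⟨y, ⟨hy, hpow⟩, hmax⟩ := (isCompact_chamberFiber hμ hk (powerSumMap μ k x)).exists_isMaxOn
    ⟨x, hx, rfl⟩ (continuous_weightedPowerSum μ (k + 1)).continuousOn
  exact ⟨y, hy, hpow, fun hflex ↦ hflex.not_isLocalMaxOn hμ hy (hpow ▸ hmax.localize)⟩

theorem exists_weightedPowerSum_eq (hμ : ∀ i, 0 < μ i) {k : ℕ} (hk : 2 ≤ k) {x y : ι → ℝ}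
    (hx : Antitone x) (hy : Antitone y) (hpow : powerSumMap μ k y = powerSumMap μ k x)
    (hrigid : ¬IsFlexible k y) {c : ℝ}
    (hc : c ∈ Set.Icc (weightedPowerSum μ (k + 1) x) (weightedPowerSum μ (k + 1) y)) :
    ∃ z, Antitone z ∧ powerSumMap μ k z = powerSumMap μ k x ∧
      weightedPowerSum μ (k + 1) z = c := by
  have continuous_pow := continuous_weightedPowerSum μ (k + 1)
  obtain ⟨z, ⟨⟨hz, hzpow⟩, hzc⟩, hmax⟩ := ((isCompact_chamberFiber hμ hk
    (powerSumMap μ k x)).inter_right (isClosed_le continuous_pow continuous_const)).exists_isMaxOn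
    ⟨x, ⟨hx, rfl⟩, hc.1⟩ continuous_pow.continuousOn
  refine ⟨z, hz, hzpow, le_antisymm hzc (not_lt.1 fun hlt ↦ ?_)⟩
  have hzrigid : ¬IsFlexible k z := fun hflex ↦ by
    refine hflex.not_isLocalMaxOn hμ hz ?_
    filter_upwards [self_mem_nhdsWithin, nhdsWithin_le_nhds
      (continuous_pow.continuousAt.eventually_lt_const hlt)] with u hu huc
    exact hmax ⟨hzpow ▸ hu, huc.le⟩
  obtain rfl := eq_of_not_isFlexible hμ hy hz (hzpow.trans hpow.symm) hrigid hzrigid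
  exact hlt.not_ge hc.2

end IntermediateValue

section RigidPart

/-- The points of a chamber fibre which are not `k`-flexible. They form one point for `k = d`, and
the whole fibre as soon as `k` is at least the number of coordinates. -/
def rigidPart {ι : Type*} [Fintype ι] [Preorder ι] (μ : ι → ℝ) (k : ℕ) {d : ℕ} (a : Fin d → ℝ) :
    Set (ι → ℝ) :=
  {x ∈ chamberFiber μ a | ¬IsFlexible k x}

theorem isCompact_rigidPart {ι : Type*} [Fintype ι] [Preorder ι] {μ : ι → ℝ}
    (hμ : ∀ i, 0 < μ i) {d : ℕ} (hd : 2 ≤ d) (k : ℕ) (a : Fin d → ℝ) :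
    IsCompact (rigidPart μ k a) :=
  (isCompact_chamberFiber hμ hd a).inter_right (isOpen_setOf_isFlexible k).isClosed_compl

theorem rigidPart_eq_chamberFiber {ι : Type*} [Fintype ι] [Preorder ι] (μ : ι → ℝ) {k : ℕ}
    (hk : Fintype.card ι ≤ k) {d : ℕ} (a : Fin d → ℝ) :
    rigidPart μ k a = chamberFiber μ a :=
  Set.sep_eq_self_iff_mem_true.2 fun x _ ↦ not_isFlexible_of_card_le hk x

variable {ι : Type*} [Fintype ι] [LinearOrder ι] {μ : ι → ℝ} {d k : ℕ}

theorem bijOn_powerSumMap_rigidPart (hμ : ∀ i, 0 < μ i) (hd : 2 ≤ d) (hdk : d ≤ k)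
    (a : Fin d → ℝ) :
    Set.BijOn (powerSumMap μ k) (rigidPart μ k a) (powerSumMap μ k '' chamberFiber μ a) := by
  refine ⟨fun x hx ↦ Set.mem_image_of_mem _ hx.1, fun y hy x hx hpow ↦
    eq_of_not_isFlexible hμ hx.1.1 hy.1.1 hpow hx.2 hy.2, ?_⟩
  rintro _ ⟨x, hx, rfl⟩
  obtain ⟨y, hy, hpow, hrigid⟩ := exists_not_isFlexible hμ (hd.trans hdk) hx.1
  exact ⟨y, ⟨⟨hy, (powerSumMap_eq_of_le hdk hpow).trans hx.2⟩, hrigid⟩, hpow⟩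

/-- The rigid part of a chamber fibre, parametrized by its first `k` power sums. -/
noncomputable def rigidPartHomeomorph (hμ : ∀ i, 0 < μ i) (hd : 2 ≤ d) (hdk : d ≤ k)
    (a : Fin d → ℝ) : rigidPart μ k a ≃ₜ powerSumMap μ k '' chamberFiber μ a :=
  haveI := isCompact_iff_compactSpace.1 (isCompact_rigidPart hμ hd k a)
  Continuous.homeoOfEquivCompactToT2 (f := (bijOn_powerSumMap_rigidPart hμ hd hdk a).equiv _)
    ((continuous_powerSumMap μ k).restrict (bijOn_powerSumMap_rigidPart hμ hd hdk a).mapsTo)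

theorem segment_subset_image_powerSumMap (hμ : ∀ i, 0 < μ i) (hd : 2 ≤ d) (hdk : d ≤ k)
    {a : Fin d → ℝ} {x y : ι → ℝ} (hy : y ∈ rigidPart μ k a) (hx : x ∈ chamberFiber μ a)
    (hpow : powerSumMap μ k y = powerSumMap μ k x) :
    segment ℝ (powerSumMap μ (k + 1) y) (powerSumMap μ (k + 1) x) ⊆
      powerSumMap μ (k + 1) '' chamberFiber μ a := by
  have hle : weightedPowerSum μ (k + 1) x ≤ weightedPowerSum μ (k + 1) y := by
    obtain rfl | hxy := eq_or_ne x y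
    · rfl
    · exact (weightedPowerSum_lt_of_not_isFlexible hμ hy.1.1 hx.1 hxy hpow.symm hy.2).le
  rintro _ ⟨s, t, hs, ht, hst, rfl⟩
  obtain ⟨z, hz, hzpow, hzc⟩ := exists_weightedPowerSum_eq hμ (hd.trans hdk) hx.1 hy.1.1 hpow hy.2
    (c := s • weightedPowerSum μ (k + 1) y + t • weightedPowerSum μ (k + 1) x)
    (convex_Icc _ _ (Set.right_mem_Icc.2 hle) (Set.left_mem_Icc.2 hle) hs ht hst)
  refine ⟨z, ⟨hz, (powerSumMap_eq_of_le hdk hzpow).trans hx.2⟩, funext fun j ↦ ?_⟩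
  rw [powerSumMap_succ, powerSumMap_succ, powerSumMap_succ, hzpow, hpow, hzc]
  refine j.lastCases (by simp) fun j ↦ ?_
  simp [← add_mul, hst]

theorem contractibleSpace_rigidPart_succ (hμ : ∀ i, 0 < μ i) (hd : 2 ≤ d) (hdk : d ≤ k)
    (a : Fin d → ℝ) [ContractibleSpace (rigidPart μ k a)] :
    ContractibleSpace (rigidPart μ (k + 1) a) := by
  have init_mem (z : powerSumMap μ (k + 1) '' chamberFiber μ a) :
      Fin.init z.1 ∈ powerSumMap μ k '' chamberFiber μ a := by
    obtain ⟨_, x, hx, rfl⟩ := z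
    exact ⟨x, hx, by simp [powerSumMap_succ]⟩
  let e := rigidPartHomeomorph hμ hd hdk a
  let f : C(powerSumMap μ (k + 1) '' chamberFiber μ a, rigidPart μ k a) :=
    ⟨fun z ↦ e.symm ⟨Fin.init z.1, init_mem z⟩, by fun_prop⟩
  let g : C(rigidPart μ k a, powerSumMap μ (k + 1) '' chamberFiber μ a) :=
    ⟨fun y ↦ ⟨powerSumMap μ (k + 1) y, Set.mem_image_of_mem _ y.2.1⟩, by fun_prop⟩
  have contractible_image : ContractibleSpace (powerSumMap μ (k + 1) '' chamberFiber μ a) := by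
    refine contractibleSpace_of_segment_subset f g ?_
    rintro ⟨_, x, hx, rfl⟩
    refine segment_subset_image_powerSumMap hμ hd hdk (e.symm _).2 hx ?_
    calc powerSumMap μ k (e.symm _ : ι → ℝ) = (e (e.symm _)).1 := rfl
      _ = powerSumMap μ k x := by simp [powerSumMap_succ]
  exact (rigidPartHomeomorph hμ hd (hdk.trans k.le_succ) a).contractibleSpace

theorem contractibleSpace_rigidPart (hμ : ∀ i, 0 < μ i) (hd : 2 ≤ d) (hdk : d ≤ k)
    {a : Fin d → ℝ} (ha : (chamberFiber μ a).Nonempty) : ContractibleSpace (rigidPart μ k a) := by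
  induction k, hdk using Nat.le_induction with
  | base =>
    obtain ⟨x, hx⟩ := ha
    obtain ⟨y, hy, hpow, hrigid⟩ := exists_not_isFlexible hμ hd hx.1
    have : Subsingleton (rigidPart μ d a) := ⟨fun y z ↦ Subtype.ext <|
      (bijOn_powerSumMap_rigidPart hμ hd le_rfl a).injOn y.2 z.2 (y.2.1.2.trans z.2.1.2.symm)⟩
    have : Nonempty (rigidPart μ d a) := ⟨⟨y, ⟨hy, hpow.trans hx.2⟩, hrigid⟩⟩
    infer_instance
  | succ k hdk ih => exact contractibleSpace_rigidPart_succ hμ hd hdk a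

theorem contractibleSpace_chamberFiber (hμ : ∀ i, 0 < μ i) {a : Fin d → ℝ}
    (ha : (chamberFiber μ a).Nonempty) : ContractibleSpace (chamberFiber μ a) := by
  rcases le_or_gt d 1 with hd | hd
  · exact (convex_chamberFiber hd a).contractibleSpace ha
  · rw [← rigidPart_eq_chamberFiber μ (le_max_right d (Fintype.card ι)) a]
    exact contractibleSpace_rigidPart hμ hd (le_max_left _ _) ha

end RigidPart

theorem vandermonde_inter_weyl_empty_or_contractible_general {ι : Type*} [Fintype ι]
    [LinearOrder ι] {μ : ι → ℝ} (hμ : ∀ i, 0 < μ i) {d : ℕ} (a : Fin d → ℝ) :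
    {x : ι → ℝ | (∀ j : Fin d, ∑ i, μ i * x i ^ ((j : ℕ) + 1) = a j) ∧ Monotone x} = ∅ ∨
      ContractibleSpace
        {x : ι → ℝ | (∀ j : Fin d, ∑ i, μ i * x i ^ ((j : ℕ) + 1) = a j) ∧ Monotone x} := by
  have eq_chamberFiber :
      {x : ι → ℝ | (∀ j : Fin d, ∑ i, μ i * x i ^ ((j : ℕ) + 1) = a j) ∧ Monotone x} =
        chamberFiber (ι := ιᵒᵈ) (μ ∘ OrderDual.ofDual) a := by
    ext x
    exact and_comm.trans (and_congr antitone_comp_ofDual_iff.symm funext_iff.symm)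
  rw [eq_chamberFiber]
  exact (Set.eq_empty_or_nonempty _).imp_right
    (contractibleSpace_chamberFiber (ι := ιᵒᵈ) fun i ↦ hμ i.ofDual)

/-- For `0 < d ≤ n` and `a ∈ ℝ^d`, the intersection of the
Vandermonde variety `V(a) = {x : p_j(x) = a_j, j = 1,…,d}` with the canonical Weyl
chamber `W_c = {x : x_1 ≤ ⋯ ≤ x_n}` is either empty or contractible. -/
theorem vandermonde_inter_weyl_empty_or_contractible (n d : ℕ)
    (hn : 0 < n) (hd : 0 < d) (hdn : d ≤ n) (a : Fin d → ℝ) :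
    ({x : Fin n → ℝ | (∀ j : Fin d, ∑ i, x i ^ ((j : ℕ) + 1) = a j) ∧ Monotone x} = ∅) ∨
      ContractibleSpace
        {x : Fin n → ℝ | (∀ j : Fin d, ∑ i, x i ^ ((j : ℕ) + 1) = a j) ∧ Monotone x} := by
  convert vandermonde_inter_weyl_empty_or_contractible_general (fun _ : Fin n ↦ one_pos) a using 4
    <;> simp
end

section
/- Let n and d be positive integers with d < n, and let x ∈ ℝⁿ have at least d+1 pairwise distinct coordinates (i.e., more than d distinct values among x_1,…,x_n). Then the (d+1)×n matrix J with entries J_{j,i} = j·x_i^{j−1} for 1 ≤ j ≤ d+1, 1 ≤ i ≤ n has rank d+1; equivalently, the gradients of the power sums p_1,…,p_{d+1} at x are linearly independent. -/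
/-! The coefficients of a linear relation among the powers `1, x, …, x ^ (m - 1)` in the algebra
`ι → R` form a polynomial of degree less than `m` that vanishes at every coordinate of `x`. Over a
domain it must be zero as soon as `x` has `m` distinct coordinates. The rows of the Jacobian are
these powers, scaled by `1, …, m`. -/

open Polynomial

theorem linearIndependent_pow_of_forall_aeval_eq_zero {R A : Type*} [CommRing R] [Ring A]
    [Algebra R A] {a : A} {m : ℕ} (h : ∀ p : R[X], p.degree < m → aeval a p = 0 → p = 0) :
    LinearIndependent R fun j : Fin m ↦ a ^ (j : ℕ) := by
  have hker : ((aeval a).toLinearMap ∘ₗ (degreeLT R m).subtype).ker = ⊥ :=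
    LinearMap.ker_eq_bot'.mpr fun p hp ↦ Subtype.ext (h p (mem_degreeLT.mp p.2) hp)
  simpa [Function.comp_def] using (degreeLT.basis R m).linearIndependent.map' _ hker

section Pi

variable {ι R : Type*} [CommRing R] [IsDomain R] {x : ι → R} {m : ℕ}

theorem eq_zero_of_degree_lt_of_aeval_pi_eq_zero {p : R[X]} (hm : m ≤ (Set.range x).encard)
    (hp : p.degree < m) (hpx : aeval x p = 0) : p = 0 := by
  obtain ⟨t, ht, htm⟩ := Set.exists_subset_encard_eq hm
  lift t to Finset R using Set.finite_of_encard_eq_coe htm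
  have hcard : t.card = m := by simpa using htm
  refine eq_zero_of_degree_lt_of_eval_finset_eq_zero t (hcard ▸ hp) fun y hy ↦ ?_
  obtain ⟨i, rfl⟩ := ht hy
  simpa using congrFun hpx i

theorem linearIndependent_pow_pi (hm : m ≤ (Set.range x).encard) :
    LinearIndependent R fun j : Fin m ↦ x ^ (j : ℕ) :=
  linearIndependent_pow_of_forall_aeval_eq_zero fun _ ↦ eq_zero_of_degree_lt_of_aeval_pi_eq_zero hm

end Pi

theorem jacobian_full_rank_general {ι K : Type*} [Fintype ι] [Field K] {m : ℕ}
    (hchar : ∀ j : Fin m, ((j : ℕ) + 1 : K) ≠ 0) {x : ι → K} (hdist : m ≤ (Set.range x).encard)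
    {J : Matrix (Fin m) ι K} (hJ : ∀ j i, J j i = ((j : ℕ) + 1) * x i ^ (j : ℕ)) :
    J.rank = m := by
  have hrow : J.row = (fun j ↦ Units.mk0 _ (hchar j)) • fun j : Fin m ↦ x ^ (j : ℕ) := by
    ext j i
    exact hJ j i
  have hli : LinearIndependent K J.row := hrow ▸ (linearIndependent_pow_pi hdist).units_smul _
  simpa using hli.rank_matrix

/-- If `x ∈ ℝⁿ` has more than `d` distinct coordinate values
(with `d < n`), then the `(d+1) × n` Jacobian matrix `J` of `(p_1,…,p_{d+1})` at
`x`, with entries `J j i = j · x_i^{j-1}`, has full rank `d + 1`. -/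
theorem jacobian_full_rank (n d : ℕ) (hd : 0 < d) (hdn : d < n) (x : Fin n → ℝ)
    (hdist : d + 1 ≤ (Finset.univ.image x).card)
    (J : Matrix (Fin (d + 1)) (Fin n) ℝ)
    (hJ : ∀ j i, J j i = ((j : ℕ) + 1) * x i ^ (j : ℕ)) :
    J.rank = d + 1 := by
  have hrange : (d + 1 : ℕ) ≤ (Set.range x).encard := by
    simpa [← Set.encard_coe_eq_coe_finsetCard] using (Nat.cast_le (α := ℕ∞)).mpr hdist
  exact jacobian_full_rank_general (fun j ↦ Nat.cast_add_one_ne_zero j) hrange hJ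
end

section
/- Let n ≥ 2 and let Z be a nonempty, closed, connected subset of the canonical Weyl chamber W_c ⊆ ℝⁿ. Then the union ⋃_{σ ∈ S_n} σ·Z over all coordinate permutations of Z is connected if and only if for every i ∈ {1,…,n−1} the intersection Z ∩ {x ∈ ℝⁿ : x_i = x_{i+1}} is nonempty. -/
/-- The canonical Weyl chamber `W_c = {x : x_1 ≤ ⋯ ≤ x_n}`. -/
def weylChamber (n : ℕ) : Set (Fin n → ℝ) := {x | Monotone x}

/-- The coordinate-permutation action of `S_n` on `ℝⁿ`: `(σ • x) i = x (σ⁻¹ i)`. -/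
def permAct {n : ℕ} (σ : Equiv.Perm (Fin n)) (x : Fin n → ℝ) : Fin n → ℝ :=
  fun i => x (σ⁻¹ i)

/-- The `i`-th coordinate index, viewed in `Fin n`. -/
def lowIdx {n : ℕ} (i : Fin (n - 1)) : Fin n := ⟨i.1, by have := i.2; omega⟩

/-- The `(i+1)`-st coordinate index, viewed in `Fin n`. -/
def highIdx {n : ℕ} (i : Fin (n - 1)) : Fin n := ⟨i.1 + 1, by have := i.2; omega⟩

/-- The wall `{x ∈ ℝⁿ : x_i = x_{i+1}}` of the canonical Weyl chamber. -/
def wall (n : ℕ) (i : Fin (n - 1)) : Set (Fin n → ℝ) :=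
  {x | x (lowIdx i) = x (highIdx i)}

/-!
The sets `Z` and `s • Z` share every point of `Z` fixed by `s`. So if `Z` meets all the walls, then
`σ • Z` meets `(σ * s) • Z` for each adjacent transposition `s`, and the adjacent transpositions
generate the symmetric group.

If `Z` misses the wall of `a ⋖ b`, then on `Z` each coordinate with index at most `a` is less than
each coordinate with index above `a`. On `σ • Z` it is then the coordinates with index in
`σ • Iic a` that are less than the others. This open condition cuts out disjoint sets for distinct
index sets of the same cardinality, so the index set is constant on the union if the latter is
connected, whereas the transposition of `a` and `b` moves `Iic a`.
-/

open Set Relation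
open Equiv (Perm swap)
open scoped Function Pointwise

section Connected

variable {X : Type*} [TopologicalSpace X]

theorem eq_of_isPreconnected_of_subset_iUnion {κ : Type*} {s : Set X} {U : κ → Set X}
    (hs : IsPreconnected s) (hU : ∀ k, IsOpen (U k)) (hdisj : Pairwise (Disjoint on U))
    (hsU : s ⊆ ⋃ k, U k) {x y : X} (hx : x ∈ s) (hy : y ∈ s) {i j : κ}
    (hxi : x ∈ U i) (hyj : y ∈ U j) : i = j := by
  have hcover : s ⊆ U i ∪ ⋃ k ≠ i, U k := by
    intro z hz
    obtain ⟨k, hzk⟩ := mem_iUnion.1 (hsU hz)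
    obtain rfl | hki := eq_or_ne k i
    · exact Or.inl hzk
    · exact Or.inr (mem_biUnion hki hzk)
  have hsub : s ⊆ U i :=
    hs.subset_left_of_subset_union (hU i) (isOpen_biUnion fun k _ => hU k)
      (disjoint_iUnion₂_right.2 fun _ hki => hdisj (Ne.symm hki)) hcover ⟨x, hx, hxi⟩
  exact hdisj.eq (not_disjoint_iff.2 ⟨y, hsub hy, hyj⟩)

theorem isConnected_iUnion_smul_of_closure_eq_top {G : Type*} [Group G] [MulAction G X]
    [ContinuousConstSMul G X] {S : Set G} (hS : Subgroup.closure S = ⊤) {Z : Set X}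
    (hZ : IsConnected Z) (hmeet : ∀ s ∈ S, (Z ∩ s • Z).Nonempty) :
    IsConnected (⋃ g : G, g • Z) := by
  have hstep : ∀ g, ∀ s ∈ S, (g • Z ∩ (g * s) • Z).Nonempty := by
    intro g s hs
    simpa only [smul_set_inter, smul_smul] using (hmeet s hs).smul_set (a := g)
  have hreach : ∀ g k : G, ReflTransGen (fun g h => (g • Z ∩ h • Z).Nonempty) g (g * k) := by
    intro g k
    have hk : k ∈ Subgroup.closure S := hS ▸ Subgroup.mem_top k
    induction hk using Subgroup.closure_induction_right with
    | one => rw [mul_one]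
    | mul_right k _ s hs ih =>
      rw [← mul_assoc]
      exact ih.tail (hstep (g * k) s hs)
    | mul_inv_cancel k _ s hs ih =>
      refine ih.tail ?_
      rw [inter_comm]
      simpa only [mul_assoc, inv_mul_cancel, mul_one] using hstep (g * (k * s⁻¹)) s hs
  refine IsConnected.iUnion_of_reflTransGen
    (fun g => hZ.image _ (continuous_const_smul g).continuousOn) fun g h => ?_
  simpa only [mul_inv_cancel_left] using hreach g (g⁻¹ * h)

end Connected

theorem closure_swap_covBy {ι : Type*} [LinearOrder ι] [Finite ι] :
    Subgroup.closure {σ : Perm ι | ∃ a b, a ⋖ b ∧ swap a b = σ} = ⊤ := by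
  have := Fintype.ofFinite ι
  have := Fintype.toLocallyFiniteOrder (α := ι)
  set H := Subgroup.closure {σ : Perm ι | ∃ a b, a ⋖ b ∧ swap a b = σ}
  have swap_mem_of_le : ∀ a b : ι, a ≤ b → swap a b ∈ H := by
    intro a b hab
    rw [le_iff_reflTransGen_covBy] at hab
    induction hab with
    | refl => exact Equiv.swap_self a ▸ H.one_mem
    | tail _ hbc ih =>
      exact SubmonoidClass.swap_mem_trans H ih (Subgroup.subset_closure ⟨_, _, hbc, rfl⟩)
  rw [eq_top_iff, ← Equiv.Perm.closure_isSwap, Subgroup.closure_le]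
  rintro _ ⟨a, b, -, rfl⟩
  obtain hab | hba := le_total a b
  · exact swap_mem_of_le a b hab
  · exact Equiv.swap_comm a b ▸ swap_mem_of_le b a hba

section Arrow

attribute [local instance] arrowAction

theorem continuousConstSMul_arrow {G ι α : Type*} [Group G] [MulAction G ι] [TopologicalSpace α] :
    ContinuousConstSMul G (ι → α) :=
  ⟨fun g => continuous_pi fun i => continuous_apply (g⁻¹ • i)⟩

theorem swap_smul_eq_self {ι α : Type*} [DecidableEq ι] {x : ι → α} {a b : ι} (h : x a = x b) :
    swap a b • x = x :=
  funext (Equiv.apply_swap_eq_self h)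

/-- The functions whose values on `T` are all less than their values off `T`. Ties within `T` and
within its complement are allowed, so that these sets can separate the translates of a set that
misses a single wall. -/
def strictCut {ι : Type*} (α : Type*) [LT α] (T : Set ι) : Set (ι → α) :=
  {x | ∀ i ∈ T, ∀ j ∉ T, x i < x j}

theorem smul_mem_strictCut_smul {G ι α : Type*} [Group G] [MulAction G ι] [LT α] {T : Set ι}
    {x : ι → α} (hx : x ∈ strictCut α T) (g : G) : g • x ∈ strictCut α (g • T) :=
  fun _ hi _ hj =>
    hx _ (mem_smul_set_iff_inv_smul_mem.1 hi) _ (mt mem_smul_set_iff_inv_smul_mem.2 hj)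

theorem eq_of_mem_strictCut {ι α : Type*} [Finite ι] [Preorder α] {T T' : Set ι} {x : ι → α}
    (hcard : T.ncard = T'.ncard) (hx : x ∈ strictCut α T) (hx' : x ∈ strictCut α T') :
    T = T' := by
  by_contra hne
  obtain ⟨i, hi, hi'⟩ : ∃ i ∈ T, i ∉ T' :=
    not_subset.1 fun h => hne (eq_of_subset_of_ncard_le h hcard.ge)
  obtain ⟨j, hj', hj⟩ : ∃ j ∈ T', j ∉ T :=
    not_subset.1 fun h => hne (eq_of_subset_of_ncard_le h hcard.le).symm
  exact lt_asymm (hx i hi j hj) (hx' j hj' i hi')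

theorem subset_strictCut_Iic_of_covBy {ι α : Type*} [LinearOrder ι] [PartialOrder α]
    {Z : Set (ι → α)} (hmono : ∀ x ∈ Z, Monotone x) {a b : ι} (hab : a ⋖ b)
    (hwall : ∀ x ∈ Z, x a ≠ x b) : Z ⊆ strictCut α (Iic a) := by
  intro x hx i hi j hj
  calc
    x i ≤ x a := hmono x hx hi
    _ < x b := (hmono x hx hab.le).lt_of_ne (hwall x hx)
    _ ≤ x j := hmono x hx (hab.ge_of_gt (not_le.1 hj))

section OrderClosed

variable {ι α : Type*} [Finite ι] [LinearOrder α] [TopologicalSpace α] [OrderClosedTopology α]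
  {Z : Set (ι → α)}

theorem isOpen_strictCut (T : Set ι) : IsOpen (strictCut α T) := by
  simp only [strictCut, ofPred_forall]
  exact isOpen_iInter_of_finite fun i => isOpen_iInter_of_finite fun _ =>
    isOpen_iInter_of_finite fun j => isOpen_iInter_of_finite fun _ =>
      isOpen_lt (continuous_apply i) (continuous_apply j)

theorem smul_eq_of_isPreconnected_iUnion_smul (hne : Z.Nonempty)
    (hU : IsPreconnected (⋃ σ : Perm ι, σ • Z)) {T : Set ι} (hZT : Z ⊆ strictCut α T)
    (σ : Perm ι) : σ • T = T := by
  obtain ⟨z, hz⟩ := hne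
  let cut : {T' : Set ι // T'.ncard = T.ncard} → Set (ι → α) := fun T' => strictCut α T'
  have hdisj : Pairwise (Disjoint on cut) := fun T₁ T₂ hT => disjoint_left.2 fun _ h₁ h₂ =>
    hT (Subtype.ext (eq_of_mem_strictCut (T₁.2.trans T₂.2.symm) h₁ h₂))
  have hcover : ⋃ σ : Perm ι, σ • Z ⊆ ⋃ T', cut T' := by
    refine iUnion_subset fun τ => ?_
    rintro _ ⟨x, hx, rfl⟩
    exact mem_iUnion.2 ⟨⟨τ • T, ncard_smul_set τ T⟩, smul_mem_strictCut_smul (hZT hx) τ⟩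
  have hmem : ∀ τ : Perm ι, τ • z ∈ ⋃ σ : Perm ι, σ • Z :=
    fun τ => mem_iUnion.2 ⟨τ, smul_mem_smul_set hz⟩
  have hσ : (⟨σ • T, ncard_smul_set σ T⟩ : {T' : Set ι // T'.ncard = T.ncard}) = ⟨T, rfl⟩ :=
    eq_of_isPreconnected_of_subset_iUnion (U := cut) hU (fun T' => isOpen_strictCut T'.1) hdisj
      hcover (hmem σ) (hmem 1) (smul_mem_strictCut_smul (hZT hz) σ)
      (by simpa only [one_smul] using hZT hz)
  exact congrArg Subtype.val hσ

variable [LinearOrder ι]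

theorem exists_apply_eq_apply_of_isPreconnected_iUnion_smul (hmono : ∀ x ∈ Z, Monotone x)
    (hne : Z.Nonempty) (hU : IsPreconnected (⋃ σ : Perm ι, σ • Z)) {a b : ι} (hab : a ⋖ b) :
    ∃ x ∈ Z, x a = x b := by
  by_contra! hwall
  have hfix : swap a b • Iic a = Iic a := smul_eq_of_isPreconnected_iUnion_smul hne hU
    (subset_strictCut_Iic_of_covBy hmono hab hwall) _
  have hb : swap a b • a ∈ swap a b • Iic a := smul_mem_smul_set self_mem_Iic
  rw [hfix, Equiv.Perm.smul_def, Equiv.swap_apply_left] at hb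
  exact hab.lt.not_ge hb

theorem mirrored_union_connected_iff_general (hmono : ∀ x ∈ Z, Monotone x) (hZ : IsConnected Z) :
    IsConnected (⋃ σ : Perm ι, σ • Z) ↔ ∀ a b : ι, a ⋖ b → ∃ x ∈ Z, x a = x b := by
  refine ⟨fun hU a b => exists_apply_eq_apply_of_isPreconnected_iUnion_smul hmono hZ.nonempty
    hU.isPreconnected, fun hwall => ?_⟩
  have : ContinuousConstSMul (Perm ι) (ι → α) := continuousConstSMul_arrow
  refine isConnected_iUnion_smul_of_closure_eq_top closure_swap_covBy hZ ?_
  rintro _ ⟨a, b, hab, rfl⟩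
  obtain ⟨x, hx, hxab⟩ := hwall a b hab
  exact ⟨x, hx, x, hx, swap_smul_eq_self hxab⟩

end OrderClosed

end Arrow

theorem forall_covBy_iff_forall_lowIdx_highIdx {n : ℕ} {P : Fin n → Fin n → Prop} :
    (∀ a b, a ⋖ b → P a b) ↔ ∀ i : Fin (n - 1), P (lowIdx i) (highIdx i) := by
  simp only [Fin.covBy_iff, Nat.covBy_iff_add_one_eq]
  constructor
  · intro h i
    exact h _ _ rfl
  · intro h a b hab
    have hb : highIdx ⟨a, by omega⟩ = b := Fin.ext hab
    exact hb ▸ h ⟨a, by omega⟩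

/-- For a nonempty, closed, connected subset `Z` of the canonical
Weyl chamber, the union `⋃_{σ ∈ S_n} σ·Z` is connected if and only if `Z` meets
every wall `{x : x_i = x_{i+1}}`, `i = 1, …, n-1`. -/
theorem mirrored_union_connected_iff (n : ℕ) (hn : 2 ≤ n) (Z : Set (Fin n → ℝ))
    (hZsub : Z ⊆ weylChamber n) (hZne : Z.Nonempty) (hZcl : IsClosed Z)
    (hZconn : IsConnected Z) :
    IsConnected (⋃ σ : Equiv.Perm (Fin n), permAct σ '' Z) ↔
      ∀ i : Fin (n - 1), (Z ∩ wall n i).Nonempty :=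
  (mirrored_union_connected_iff_general hZsub hZconn).trans forall_covBy_iff_forall_lowIdx_highIdx
end

section
/- Let n ≥ 2, let Z be a nonempty, closed, connected subset of the canonical Weyl chamber W_c ⊆ ℝⁿ, let x ∈ Z, and let σ ∈ S_n. Then x and σ·x lie in the same connected component of ⋃_{τ ∈ S_n} τ·Z if and only if σ belongs to the subgroup of S_n generated by the adjacent transpositions (i,i+1) for which Z ∩ {x ∈ ℝⁿ : x_i = x_{i+1}} is nonempty. -/
/-!
Let a group act on a space by homeomorphisms, and let `U` be the union of the translates of `Z`.
An element moving `Z` to a translate which meets `Z` preserves the component of `U` containing the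
connected set `Z`, and so does the subgroup `H` generated by these elements. Conversely the
translates of `Z` by `H` are disjoint from the other ones, so for a locally finite family of closed
translates `H • Z` is clopen in `U` and hence is that component.

The Weyl chamber is a strict fundamental domain: if `z` and `σ • z` are both monotone, they agree.
So a permutation moves `Z ⊆ W_c` to a set which meets `Z` exactly when it fixes a point of `Z`, and
the stabilizer of a monotone tuple is generated by the adjacent transpositions fixing it.
-/

open MulAction
open scoped Pointwise

section Saturated

variable {ι X : Type*} [TopologicalSpace X]

theorem subset_biUnion_of_isPreconnected_of_saturated {s : ι → Set X} (hfin : LocallyFinite s)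
    (hclosed : ∀ i, IsClosed (s i)) {t : Set ι}
    (ht : ∀ i ∈ t, ∀ j, (s i ∩ s j).Nonempty → j ∈ t) {C : Set X} (hC : IsPreconnected C)
    (hCs : C ⊆ ⋃ i, s i) (hCt : (C ∩ ⋃ i ∈ t, s i).Nonempty) : C ⊆ ⋃ i ∈ t, s i := by
  have hclosed_biUnion (u : Set ι) : IsClosed (⋃ i ∈ u, s i) := by
    rw [Set.biUnion_eq_iUnion]
    exact (hfin.comp_injective Subtype.val_injective).isClosed_iUnion fun i ↦ hclosed i
  have hdisj : Disjoint (⋃ i ∈ t, s i) (⋃ i ∈ tᶜ, s i) := by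
    simp only [Set.disjoint_iUnion_left, Set.disjoint_iUnion_right]
    intro i hi j hj
    by_contra hij
    exact hi (ht j hj i (Set.not_disjoint_iff_nonempty_inter.mp hij))
  have hcover : C ⊆ (⋃ i ∈ t, s i) ∪ ⋃ i ∈ tᶜ, s i := by
    rwa [← Set.biUnion_union, Set.union_compl_self, Set.biUnion_univ]
  refine (isPreconnected_iff_subset_of_disjoint_closed.mp hC _ _ (hclosed_biUnion t)
    (hclosed_biUnion tᶜ) hcover (by rw [hdisj.inter_eq, Set.inter_empty])).resolve_right ?_
  obtain ⟨y, hyC, hyt⟩ := hCt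
  exact fun hCtc ↦ hdisj.notMem_of_mem_left hyt (hCtc hyC)

end Saturated

section Translates

variable {G X : Type*} [Group G] [MulAction G X]

variable (G) in
/-- The subgroup generated by the elements `g` whose translate `g • Z` overlaps `Z`. Two translates
of `Z` can be joined by a chain of overlapping translates exactly when their indices lie in the same
left coset of this subgroup. -/
def overlapSubgroup (Z : Set X) : Subgroup G :=
  Subgroup.closure {g | (Z ∩ g • Z).Nonempty}

theorem mem_overlapSubgroup_of_smul_inter_smul_nonempty {Z : Set X} {g h : G}
    (hg : g ∈ overlapSubgroup G Z) (hgh : (g • Z ∩ h • Z).Nonempty) :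
    h ∈ overlapSubgroup G Z := by
  have hmem : g⁻¹ * h ∈ overlapSubgroup G Z := Subgroup.subset_closure <| by
    simpa [Set.smul_set_inter, smul_smul] using hgh.smul_set (a := g⁻¹)
  simpa using mul_mem hg hmem

variable [TopologicalSpace X] [ContinuousConstSMul G X]

theorem smul_set_connectedComponentIn {U : Set X} {x : X} (hx : x ∈ U) (g : G) :
    g • connectedComponentIn U x = connectedComponentIn (g • U) (g • x) :=
  (Homeomorph.smul g).image_connectedComponentIn hx

theorem mem_stabilizer_connectedComponentIn_iff {U : Set X} {x : X} {g : G} (hU : g • U = U)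
    (hx : x ∈ U) :
    g ∈ stabilizer G (connectedComponentIn U x) ↔ g • x ∈ connectedComponentIn U x := by
  have hgx : g • x ∈ U := hU ▸ Set.smul_mem_smul_set hx
  rw [mem_stabilizer_iff, smul_set_connectedComponentIn hx, hU]
  exact ⟨fun h ↦ h ▸ mem_connectedComponentIn hgx, fun h ↦ (connectedComponentIn_eq h).symm⟩

theorem overlapSubgroup_le_stabilizer_connectedComponentIn {Z U : Set X} {x : X}
    (hZ : IsPreconnected Z) (hZU : Z ⊆ U) (hU : ∀ g : G, g • U = U) (hx : x ∈ Z) :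
    overlapSubgroup G Z ≤ stabilizer G (connectedComponentIn U x) := by
  refine (Subgroup.closure_le _).mpr fun g hg ↦ ?_
  refine (mem_stabilizer_connectedComponentIn_iff (hU g) (hZU hx)).mpr ?_
  obtain ⟨y, hy, hgy⟩ := hg
  have hunion : IsPreconnected (Z ∪ g • Z) :=
    hZ.union y hy hgy (hZ.image _ (continuous_const_smul g).continuousOn)
  have hsub : Z ∪ g • Z ⊆ U :=
    Set.union_subset hZU (hU g ▸ Set.smul_set_mono hZU)
  exact hunion.subset_connectedComponentIn (.inl hx) hsub (.inr (Set.smul_mem_smul_set hx))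

theorem smul_mem_connectedComponentIn_iUnion_smul_iff {Z : Set X} (hclosed : IsClosed Z)
    (hfin : LocallyFinite fun g : G ↦ g • Z) (hconn : IsPreconnected Z) {x : X} (hx : x ∈ Z)
    {g : G} :
    g • x ∈ connectedComponentIn (⋃ h : G, h • Z) x ↔ g ∈ overlapSubgroup G Z := by
  have hU (g : G) : g • ⋃ h : G, h • Z = ⋃ h : G, h • Z := by
    simp only [Set.smul_set_iUnion, smul_smul]
    exact (Equiv.mulLeft g).surjective.iUnion_comp fun h ↦ h • Z
  have hZU : Z ⊆ ⋃ h : G, h • Z := by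
    simpa using Set.subset_iUnion (fun h : G ↦ h • Z) 1
  constructor
  · intro hgx
    have hcomponent : connectedComponentIn (⋃ h : G, h • Z) x ⊆
        ⋃ h ∈ (overlapSubgroup G Z : Set G), h • Z :=
      subset_biUnion_of_isPreconnected_of_saturated hfin (fun h ↦ hclosed.smul h)
        (fun _ hh _ ↦ mem_overlapSubgroup_of_smul_inter_smul_nonempty hh)
        isPreconnected_connectedComponentIn (connectedComponentIn_subset _ _)
        ⟨x, mem_connectedComponentIn (hZU hx),
          Set.mem_biUnion (one_mem (overlapSubgroup G Z)) (by simpa using hx)⟩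
    obtain ⟨h, hh, hgxh⟩ := Set.mem_iUnion₂.mp (hcomponent hgx)
    exact mem_overlapSubgroup_of_smul_inter_smul_nonempty hh
      ⟨g • x, hgxh, Set.smul_mem_smul_set hx⟩
  · exact fun hg ↦ (mem_stabilizer_connectedComponentIn_iff (hU g) (hZU hx)).mp
      (overlapSubgroup_le_stabilizer_connectedComponentIn hconn hZU hU hx hg)

end Translates

section Permutations

-- For `G = Equiv.Perm (Fin n)` the action `(σ • z) i = z (σ⁻¹ • i)` unfolds to `permAct σ z`.
attribute [local instance] arrowAction

variable {ι α : Type*}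

/-- The transpositions of two adjacent indices whose wall `{z | z i = z j}` meets `Z`. Adjacency is
expressed by the covering relation `i ⋖ j`, which on `Fin n` says that `j = i + 1`. -/
def wallSwaps [Preorder ι] [DecidableEq ι] (Z : Set (ι → α)) : Set (Equiv.Perm ι) :=
  {τ | ∃ i j, i ⋖ j ∧ τ = Equiv.swap i j ∧ (Z ∩ {z | z i = z j}).Nonempty}

theorem wallSwaps_mono [Preorder ι] [DecidableEq ι] {Y Z : Set (ι → α)} (h : Y ⊆ Z) :
    wallSwaps Y ⊆ wallSwaps Z :=
  fun _ ⟨i, j, hij, hτ, hY⟩ ↦ ⟨i, j, hij, hτ, hY.mono (Set.inter_subset_inter_left _ h)⟩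

theorem isSwap_of_mem_wallSwaps [Preorder ι] [DecidableEq ι] {Z : Set (ι → α)}
    {τ : Equiv.Perm ι} (hτ : τ ∈ wallSwaps Z) : τ.IsSwap :=
  let ⟨i, j, hij, hτ, _⟩ := hτ
  ⟨i, j, hij.ne, hτ⟩

theorem swap_smul_eq_self_s15 [DecidableEq ι] {z : ι → α} {i j : ι} (h : z i = z j) :
    Equiv.swap i j • z = z :=
  funext (Equiv.apply_swap_eq_self h)

theorem mem_orbit_closure_wallSwaps [PartialOrder ι] [LocallyFiniteOrder ι] [DecidableEq ι]
    [PartialOrder α] {z : ι → α} (hz : Monotone z) {i j : ι} (hij : i ≤ j) (h : z i = z j) :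
    j ∈ orbit (Subgroup.closure (wallSwaps {z})) i := by
  induction le_iff_reflTransGen_covBy.mp hij with
  | refl => exact mem_orbit_self i
  | @tail b c hib hbc ih =>
    have hle : i ≤ b := le_iff_reflTransGen_covBy.mpr hib
    have hbz : z i = z b := (hz hle).antisymm (h ▸ hz hbc.le)
    have hswap : Equiv.swap b c ∈ Subgroup.closure (wallSwaps {z}) :=
      Subgroup.subset_closure ⟨b, c, hbc, rfl, z, rfl, hbz.symm.trans h⟩
    rw [← orbit_eq_iff.mpr (ih hle hbz)]
    exact ⟨⟨_, hswap⟩, Equiv.swap_apply_left b c⟩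

theorem stabilizer_eq_closure_wallSwaps [LinearOrder ι] [Finite ι] [PartialOrder α] {z : ι → α}
    (hz : Monotone z) :
    stabilizer (Equiv.Perm ι) z = Subgroup.closure (wallSwaps {z}) := by
  have := Fintype.ofFinite ι
  let := Fintype.toLocallyFiniteOrder (α := ι)
  refine le_antisymm (fun σ hσ ↦ ?_) ((Subgroup.closure_le _).mpr ?_)
  · refine (mem_closure_isSwap fun _ ↦ isSwap_of_mem_wallSwaps).mpr ⟨Set.toFinite _, fun i ↦ ?_⟩
    have hi : z (σ i) = z i := congrFun (mem_stabilizer_iff.mp (inv_mem hσ)) i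
    obtain hle | hle := le_total i (σ i)
    · exact mem_orbit_closure_wallSwaps hz hle hi.symm
    · exact mem_orbit_symm.mp (mem_orbit_closure_wallSwaps hz hle hi)
  · rintro _ ⟨i, j, -, rfl, _, rfl, h⟩
    exact swap_smul_eq_self_s15 h

theorem smul_eq_self_of_monotone [PartialOrder α] {n : ℕ} {z : Fin n → α} {σ : Equiv.Perm (Fin n)}
    (hz : Monotone z) (hσz : Monotone (σ • z)) : σ • z = z :=
  Tuple.unique_monotone (f := z) (σ := σ⁻¹) (τ := 1) hσz hz

theorem overlapSubgroup_eq_closure_wallSwaps [PartialOrder α] {n : ℕ} {Z : Set (Fin n → α)}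
    (hZ : ∀ z ∈ Z, Monotone z) :
    overlapSubgroup (Equiv.Perm (Fin n)) Z = Subgroup.closure (wallSwaps Z) := by
  refine le_antisymm ((Subgroup.closure_le _).mpr ?_) (Subgroup.closure_mono ?_)
  · rintro σ ⟨_, hσz, z, hz, rfl⟩
    have hfix : σ ∈ stabilizer (Equiv.Perm (Fin n)) z :=
      smul_eq_self_of_monotone (hZ z hz) (hZ _ hσz)
    rw [stabilizer_eq_closure_wallSwaps (hZ z hz)] at hfix
    exact Subgroup.closure_mono (wallSwaps_mono (Set.singleton_subset_iff.mpr hz)) hfix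
  · rintro _ ⟨i, j, -, rfl, z, hz, h⟩
    exact ⟨z, hz, z, hz, swap_smul_eq_self_s15 h⟩

theorem continuousConstSMul_arrowAction {G : Type*} [Group G] [MulAction G ι]
    [TopologicalSpace α] : ContinuousConstSMul G (ι → α) where
  continuous_const_smul g := continuous_pi fun i ↦ continuous_apply (g⁻¹ • i)

theorem mirrored_transposition_connectivity_general [TopologicalSpace α] [PartialOrder α] {n : ℕ}
    {Z : Set (Fin n → α)} (hmono : ∀ z ∈ Z, Monotone z) (hclosed : IsClosed Z)
    (hconn : IsPreconnected Z) {x : Fin n → α} (hx : x ∈ Z) {σ : Equiv.Perm (Fin n)} :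
    σ • x ∈ connectedComponentIn (⋃ τ : Equiv.Perm (Fin n), τ • Z) x ↔
      σ ∈ Subgroup.closure (wallSwaps Z) := by
  have : ContinuousConstSMul (Equiv.Perm (Fin n)) (Fin n → α) := continuousConstSMul_arrowAction
  rw [← overlapSubgroup_eq_closure_wallSwaps hmono]
  exact smul_mem_connectedComponentIn_iUnion_smul_iff hclosed (locallyFinite_of_finite _) hconn hx

end Permutations

theorem covBy_iff_exists_lowIdx_highIdx {n : ℕ} {i j : Fin n} :
    i ⋖ j ↔ ∃ k : Fin (n - 1), lowIdx k = i ∧ highIdx k = j := by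
  simp only [Fin.covBy_iff, Nat.covBy_iff_add_one_eq, lowIdx, highIdx, Fin.ext_iff]
  exact ⟨fun h ↦ ⟨⟨i, by omega⟩, rfl, h⟩, fun ⟨_, hi, hj⟩ ↦ hi ▸ hj⟩

theorem wallSwaps_eq_setOf_wall {n : ℕ} (Z : Set (Fin n → ℝ)) :
    wallSwaps Z = {τ | ∃ i : Fin (n - 1), τ = Equiv.swap (lowIdx i) (highIdx i) ∧
      (Z ∩ wall n i).Nonempty} := by
  ext τ
  simp only [wallSwaps, covBy_iff_exists_lowIdx_highIdx, wall, Set.mem_ofPred_eq]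
  constructor
  · rintro ⟨_, _, ⟨k, rfl, rfl⟩, h⟩
    exact ⟨k, h⟩
  · rintro ⟨k, h⟩
    exact ⟨lowIdx k, highIdx k, ⟨k, rfl, rfl⟩, h⟩

/-- Let `Z` be a nonempty, closed, connected subset of the
canonical Weyl chamber, `x ∈ Z` and `σ ∈ S_n`. Then `x` and `σ·x` lie in the same
connected component of `⋃_{τ ∈ S_n} τ·Z` if and only if `σ` lies in the subgroup
generated by the adjacent transpositions `(i, i+1)` whose wall meets `Z`. -/
theorem mirrored_transposition_connectivity (n : ℕ) (hn : 2 ≤ n) (Z : Set (Fin n → ℝ))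
    (hZsub : Z ⊆ weylChamber n) (hZne : Z.Nonempty) (hZcl : IsClosed Z)
    (hZconn : IsConnected Z) (x : Fin n → ℝ) (hx : x ∈ Z) (σ : Equiv.Perm (Fin n)) :
    permAct σ x ∈ connectedComponentIn (⋃ τ : Equiv.Perm (Fin n), permAct τ '' Z) x ↔
      σ ∈ Subgroup.closure {τ : Equiv.Perm (Fin n) |
        ∃ i : Fin (n - 1), τ = Equiv.swap (lowIdx i) (highIdx i) ∧
          (Z ∩ wall n i).Nonempty} := by
  rw [← wallSwaps_eq_setOf_wall]
  exact mirrored_transposition_connectivity_general hZsub hZcl hZconn.isPreconnected hx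
end

section
/- Let S ⊆ ℝⁿ be a closed, bounded set invariant under the coordinate-permutation action of S_n, such that S_c = S ∩ W_c has finitely many connected components. Let x ∈ S_c and y ∈ S, and let y' ∈ W_c be the vector obtained by sorting the coordinates of y in nondecreasing order. Let 𝒞 be the connected component of S_c containing x, and let G(𝒞) be the subgroup of S_n generated by the adjacent transpositions (i,i+1) for which 𝒞 ∩ {x ∈ ℝⁿ : x_i = x_{i+1}} is nonempty. Then x and y lie in the same connected component of S if and only if: (1) y' lies in 𝒞, and (2) there exists σ ∈ G(𝒞) with σ·y = y'. -/
/-!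
Sorting coordinates is a continuous retraction of `ℝⁿ` onto the Weyl chamber: it agrees with a
single permutation on each of the finitely many permuted chambers, and these are closed. It
therefore maps the component `D` of `x` in `S` into `𝒞`, so that `D` is covered by the translates
`σ • 𝒞`. If `σ • 𝒞` meets `τ • 𝒞`, then `σ⁻¹ * τ` fixes a point of `𝒞`. Hence the translates of `𝒞`
by the group `H` generated by the stabilizers of the points of `𝒞` are separated from all others,
and `D` lies in `H • 𝒞`. Conversely an element fixing a point of `D` maps `D` onto itself, so
`D = H • 𝒞`. Finally `H = G(𝒞)`: the stabilizer of a monotone vector permutes its blocks of equal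
coordinates, and is thus generated by the adjacent transpositions within those blocks.
-/

open Set MulAction
open scoped Pointwise

section Topology

variable {X : Type*} [TopologicalSpace X]

theorem closure_connectedComponentIn_inter_subset (S : Set X) (x : X) :
    closure (connectedComponentIn S x) ∩ S ⊆ connectedComponentIn S x := by
  by_cases hx : x ∈ S
  · have hxC := mem_connectedComponentIn hx
    have hC : connectedComponentIn S x ⊆ closure (connectedComponentIn S x) ∩ S :=
      subset_inter subset_closure (connectedComponentIn_subset S x)
    exact (isPreconnected_connectedComponentIn.subset_closure hC inter_subset_left
      ).subset_connectedComponentIn (hC hxC) inter_subset_right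
  · simp [connectedComponentIn_eq_empty hx]

theorem subset_biUnion_of_isPreconnected {ι : Type*} [Finite ι] {D : Set X} {A : ι → Set X}
    {I : Set ι} (hD : IsPreconnected D) (hA : ∀ i, closure (A i) ∩ D ⊆ A i)
    (hcover : D ⊆ ⋃ i, A i) (hdisj : ∀ i ∈ I, ∀ j ∉ I, Disjoint (A i) (A j))
    (hne : (D ∩ ⋃ i ∈ I, A i).Nonempty) : D ⊆ ⋃ i ∈ I, A i := by
  have isClosed_biUnion (J : Set ι) : IsClosed (⋃ i ∈ J, closure (A i)) :=
    J.toFinite.isClosed_biUnion fun _ _ => isClosed_closure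
  have mem_biUnion_of_closure {J : Set ι} {z : X} (hzD : z ∈ D)
      (hz : z ∈ ⋃ i ∈ J, closure (A i)) : z ∈ ⋃ i ∈ J, A i := by
    obtain ⟨i, hi, hzi⟩ := mem_iUnion₂.mp hz
    exact mem_biUnion hi (hA i ⟨hzi, hzD⟩)
  have hcover' : D ⊆ (⋃ i ∈ I, closure (A i)) ∪ ⋃ i ∈ Iᶜ, closure (A i) := by
    intro z hz
    obtain ⟨i, hi⟩ := mem_iUnion.mp (hcover hz)
    by_cases hiI : i ∈ I
    · exact Or.inl (mem_biUnion hiI (subset_closure hi))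
    · exact Or.inr (mem_biUnion hiI (subset_closure hi))
  have hdisj' {z : X} (hzI : z ∈ ⋃ i ∈ I, A i) : z ∉ ⋃ i ∈ Iᶜ, A i := by
    intro hzIc
    obtain ⟨i, hi, hzi⟩ := mem_iUnion₂.mp hzI
    obtain ⟨j, hj, hzj⟩ := mem_iUnion₂.mp hzIc
    exact disjoint_left.mp (hdisj i hi j hj) hzi hzj
  have hsep : D ∩ ((⋃ i ∈ I, closure (A i)) ∩ ⋃ i ∈ Iᶜ, closure (A i)) = ∅ :=
    eq_empty_of_forall_notMem fun _ ⟨hzD, hzI, hzIc⟩ =>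
      hdisj' (mem_biUnion_of_closure hzD hzI) (mem_biUnion_of_closure hzD hzIc)
  obtain hDI | hDIc := isPreconnected_iff_subset_of_disjoint_closed.mp hD _ _
    (isClosed_biUnion I) (isClosed_biUnion Iᶜ) hcover' hsep
  · exact fun z hz => mem_biUnion_of_closure hz (hDI hz)
  · obtain ⟨z, hzD, hzI⟩ := hne
    exact absurd (mem_biUnion_of_closure hzD (hDIc hzD)) (hdisj' hzI)

end Topology

section GroupAction

variable {G X : Type*} [Group G] [MulAction G X] {C F S : Set X} {x y z : X} {g k : G}

variable (G) in
/-- A set containing exactly one point of each orbit of `G`, as a closed Weyl chamber does for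
the corresponding reflection group. -/
structure IsStrictFundamentalDomain (F : Set X) : Prop where
  exists_smul_mem : ∀ x, ∃ g : G, g • x ∈ F
  smul_eq_self : ∀ {g : G} {x}, x ∈ F → g • x ∈ F → g • x = x

variable (G) in
/-- The subgroup generated by the isotropy groups of the points of `C`. For `C` in a Weyl chamber
it is the group `G(C)` generated by the reflections in the walls meeting `C`. -/
def isotropySubgroup (C : Set X) : Subgroup G :=
  ⨆ c ∈ C, stabilizer G c

theorem mem_isotropySubgroup_of_smul_eq_self (hx : x ∈ C) (hg : g • x = x) :
    g ∈ isotropySubgroup G C :=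
  le_biSup (stabilizer G) hx hg

namespace IsStrictFundamentalDomain

theorem disjoint_smul (hF : IsStrictFundamentalDomain G F) (hCF : C ⊆ F)
    (hg : g ∈ isotropySubgroup G C) (hk : k ∉ isotropySubgroup G C) :
    Disjoint (g • C) (k • C) := by
  refine disjoint_left.mpr ?_
  rintro _ ⟨c, hc, rfl⟩ ⟨d, hd, hdc : k • d = g • c⟩
  have hgk : (g⁻¹ * k) • d = c := by rw [mul_smul, hdc, inv_smul_smul]
  have hfix : (g⁻¹ * k) • d = d := hF.smul_eq_self (hCF hd) (hgk ▸ hCF hc)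
  have hmem := mem_isotropySubgroup_of_smul_eq_self hd hfix
  exact hk ((Subgroup.mul_mem_cancel_left _ (inv_mem hg)).mp hmem)

theorem mem_isotropySubgroup_smul_iff (hF : IsStrictFundamentalDomain G F) (hCF : C ⊆ F)
    (hz : z ∈ F) (hyz : ∃ g : G, g • y = z) :
    y ∈ (isotropySubgroup G C : Set G) • C ↔
      z ∈ C ∧ ∃ g ∈ isotropySubgroup G C, g • y = z := by
  constructor
  · rintro ⟨g, hg, c, hc, rfl⟩
    obtain ⟨k, rfl⟩ := hyz
    have hkg : k • g • c = c := by
      rw [← mul_smul] at hz ⊢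
      exact hF.smul_eq_self (hCF hc) hz
    simp only [hkg]
    exact ⟨hc, g⁻¹, inv_mem hg, inv_smul_smul g c⟩
  · rintro ⟨hzC, g, hg, rfl⟩
    exact ⟨g⁻¹, inv_mem hg, g • y, hzC, inv_smul_smul g y⟩

/-- The retraction of `X` onto `F` sending each point to the representative of its orbit. -/
noncomputable def retract (hF : IsStrictFundamentalDomain G F) (x : X) : X :=
  (hF.exists_smul_mem x).choose • x

theorem retract_mem (hF : IsStrictFundamentalDomain G F) (x : X) : hF.retract x ∈ F :=
  (hF.exists_smul_mem x).choose_spec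

theorem retract_eq_smul (hF : IsStrictFundamentalDomain G F) (hgx : g • x ∈ F) :
    hF.retract x = g • x := by
  set k := (hF.exists_smul_mem x).choose
  have hkx : (k * g⁻¹) • g • x = hF.retract x := by rw [mul_smul, inv_smul_smul, retract]
  rw [← hkx]
  exact hF.smul_eq_self hgx (hkx ▸ hF.retract_mem x)

theorem retract_eq_self (hF : IsStrictFundamentalDomain G F) (hx : x ∈ F) :
    hF.retract x = x := by
  simpa only [one_smul] using hF.retract_eq_smul (g := 1) (by rwa [one_smul])

variable [TopologicalSpace X] [ContinuousConstSMul G X]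

theorem continuous_retract [Finite G] (hF : IsStrictFundamentalDomain G F) (hFcl : IsClosed F) :
    Continuous hF.retract := by
  refine (locallyFinite_of_finite fun g : G => (g • ·) ⁻¹' F).continuous
    (iUnion_eq_univ_iff.mpr hF.exists_smul_mem)
    (fun g => hFcl.preimage (continuous_const_smul g)) fun g => ?_
  exact (continuous_const_smul g).continuousOn.congr fun x hx => hF.retract_eq_smul hx

theorem connectedComponentIn_subset_iUnion_smul [Finite G] (hF : IsStrictFundamentalDomain G F)
    (hFcl : IsClosed F) (hS : IsFixedBlock G S) (hx : x ∈ S ∩ F) :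
    connectedComponentIn S x ⊆ ⋃ g : G, g • connectedComponentIn (S ∩ F) x := by
  intro z hz
  have himage : hF.retract '' S ⊆ S ∩ F := by
    rintro _ ⟨w, hw, rfl⟩
    exact ⟨hS.isInvariantBlock _ (smul_mem_smul_set hw), hF.retract_mem w⟩
  have hzC : hF.retract z ∈ connectedComponentIn (S ∩ F) x := by
    have hz' := (hF.continuous_retract hFcl).continuousOn.mapsTo_connectedComponentIn hx.1 hz
    rw [hF.retract_eq_self hx.2] at hz'
    exact connectedComponentIn_mono x himage hz'
  exact mem_iUnion.mpr ⟨(hF.exists_smul_mem z).choose⁻¹, mem_inv_smul_set_iff.mpr hzC⟩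

end IsStrictFundamentalDomain

section Topology

variable [TopologicalSpace X] [ContinuousConstSMul G X]

theorem smul_connectedComponentIn (g : G) (hx : x ∈ S) :
    g • connectedComponentIn S x = connectedComponentIn (g • S) (g • x) :=
  (Homeomorph.smul g).image_connectedComponentIn hx

theorem isotropySubgroup_le_stabilizer_connectedComponentIn (hS : IsFixedBlock G S)
    (hC : C ⊆ connectedComponentIn S x) :
    isotropySubgroup G C ≤ stabilizer G (connectedComponentIn S x) := by
  refine iSup₂_le fun c hc g hg => ?_
  have hcS : c ∈ S := connectedComponentIn_subset S x (hC hc)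
  rw [mem_stabilizer_iff, connectedComponentIn_eq (hC hc), smul_connectedComponentIn g hcS, hS g,
    mem_stabilizer_iff.mp hg]

theorem IsStrictFundamentalDomain.connectedComponentIn_eq_smul [Finite G]
    (hF : IsStrictFundamentalDomain G F) (hFcl : IsClosed F) (hS : IsFixedBlock G S)
    (hx : x ∈ S ∩ F) :
    connectedComponentIn S x =
      (isotropySubgroup G (connectedComponentIn (S ∩ F) x) : Set G) •
        connectedComponentIn (S ∩ F) x := by
  set C := connectedComponentIn (S ∩ F) x
  have hCF : C ⊆ F := (connectedComponentIn_subset _ _).trans inter_subset_right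
  have hCD : C ⊆ connectedComponentIn S x := connectedComponentIn_mono x inter_subset_left
  refine Subset.antisymm ?_ ?_
  · have hclosed (g : G) : closure (g • C) ∩ connectedComponentIn S x ⊆ g • C := by
      rw [closure_smul]
      rintro _ ⟨⟨c, hc, rfl⟩, hgc⟩
      have hcS : c ∈ S := by
        rw [← smul_mem_smul_set_iff (a := g), hS g]
        exact connectedComponentIn_subset S x hgc
      exact smul_mem_smul_set (closure_connectedComponentIn_inter_subset _ _
        ⟨hc, hcS, closure_minimal hCF hFcl hc⟩)
    have hxC : x ∈ (isotropySubgroup G C : Set G) • C :=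
      ⟨1, one_mem _, x, mem_connectedComponentIn hx, one_smul G x⟩
    rw [← iUnion_smul_set] at hxC ⊢
    exact subset_biUnion_of_isPreconnected isPreconnected_connectedComponentIn hclosed
      (hF.connectedComponentIn_subset_iUnion_smul hFcl hS hx)
      (fun g hg k hk => hF.disjoint_smul hCF hg hk)
      ⟨x, mem_connectedComponentIn hx.1, hxC⟩
  · rintro _ ⟨g, hg, c, hc, rfl⟩
    rw [← mem_stabilizer_iff.mp (isotropySubgroup_le_stabilizer_connectedComponentIn hS hCD hg)]
    exact smul_mem_smul_set (hCD hc)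

end Topology

end GroupAction

section Permutation

open Equiv (Perm swap)

-- On `Fin n → ℝ` this is definitionally the action `permAct`.
attribute [local instance] arrowAction

variable {ι α : Type*}

theorem arrowAction_smul_eq_comp (σ : Perm ι) (u : ι → α) : σ • u = u ∘ ⇑σ⁻¹ :=
  rfl

theorem smul_eq_self_iff_comp_eq {σ : Perm ι} {u : ι → α} : σ • u = u ↔ u ∘ σ = u := by
  rw [← eq_inv_smul_iff, eq_comm, arrowAction_smul_eq_comp, inv_inv]

theorem continuousConstSMul_arrowAction_s16 [TopologicalSpace α] :
    ContinuousConstSMul (Perm ι) (ι → α) :=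
  ⟨fun σ => continuous_pi fun i => continuous_apply (σ⁻¹ i)⟩

theorem isStrictFundamentalDomain_setOf_monotone (n : ℕ) (α : Type*) [LinearOrder α] :
    IsStrictFundamentalDomain (Perm (Fin n)) {u : Fin n → α | Monotone u} where
  exists_smul_mem u := ⟨(Tuple.sort u)⁻¹, Tuple.monotone_sort u⟩
  smul_eq_self {σ u} hu hσu := Tuple.unique_monotone (f := u) (σ := σ⁻¹) (τ := 1) hσu hu

theorem swap_mem_closure_covBy_of_monotone [LinearOrder ι] [LocallyFiniteOrder ι] [PartialOrder α]
    {u : ι → α} (hu : Monotone u) {a b : ι} (hab : u a = u b) :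
    swap a b ∈ Subgroup.closure {τ | ∃ i j, i ⋖ j ∧ τ = swap i j ∧ u i = u j} := by
  wlog hle : a ≤ b generalizing a b
  · rw [Equiv.swap_comm]
    exact this hab.symm (le_of_not_ge hle)
  induction le_iff_reflTransGen_covBy.mp hle using Relation.ReflTransGen.head_induction_on with
  | refl => exact Equiv.swap_self b ▸ one_mem _
  | @head a c hac hcb ih =>
    have hcb' := le_iff_reflTransGen_covBy.mpr hcb
    have huac : u a = u c := (hu hac.le).antisymm (hab ▸ hu hcb')
    exact SubmonoidClass.swap_mem_trans _ (Subgroup.subset_closure ⟨a, c, hac, rfl, huac⟩)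
      (ih (huac ▸ hab) hcb')

theorem stabilizer_eq_closure_covBy_of_monotone [LinearOrder ι] [Finite ι] [PartialOrder α]
    {u : ι → α} (hu : Monotone u) :
    stabilizer (Perm ι) u =
      Subgroup.closure {τ | ∃ i j, i ⋖ j ∧ τ = swap i j ∧ u i = u j} := by
  cases nonempty_fintype ι
  let := Fintype.toLocallyFiniteOrder (α := ι)
  refine le_antisymm (fun σ hσ => ?_) ((Subgroup.closure_le _).mpr ?_)
  · have isSwap : ∀ τ ∈ {τ : Perm ι | ∃ i j, i ⋖ j ∧ τ = swap i j ∧ u i = u j}, τ.IsSwap := by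
      rintro _ ⟨i, j, hij, rfl, -⟩
      exact ⟨i, j, hij.ne, rfl⟩
    refine (mem_closure_isSwap isSwap).mpr ⟨toFinite _, fun i => ?_⟩
    exact (swap_mem_closure_isSwap isSwap).mp <|
      swap_mem_closure_covBy_of_monotone hu (congrFun (smul_eq_self_iff_comp_eq.mp hσ) i)
  · rintro _ ⟨i, j, -, rfl, hij⟩
    exact smul_eq_self_iff_comp_eq.mpr (by simp [Equiv.comp_swap_eq_update, hij])

theorem isotropySubgroup_eq_closure_covBy [LinearOrder ι] [Finite ι] [PartialOrder α]
    {C : Set (ι → α)} (hC : C ⊆ {u | Monotone u}) :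
    isotropySubgroup (Perm ι) C =
      Subgroup.closure {τ | ∃ i j, i ⋖ j ∧ τ = swap i j ∧ (C ∩ {u | u i = u j}).Nonempty} := by
  have hgenerators : {τ : Perm ι | ∃ i j, i ⋖ j ∧ τ = swap i j ∧ (C ∩ {u | u i = u j}).Nonempty} =
      ⋃ u ∈ C, {τ | ∃ i j, i ⋖ j ∧ τ = swap i j ∧ u i = u j} := by
    ext τ
    simp only [Set.Nonempty, mem_iUnion, mem_ofPred_eq, mem_inter_iff]
    grind
  simp only [hgenerators, Subgroup.closure_iUnion]
  exact biSup_congr fun u hu => stabilizer_eq_closure_covBy_of_monotone (hC hu)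

theorem exists_lowIdx_highIdx_iff {n : ℕ} {p : Fin n → Fin n → Prop} :
    (∃ i, p (lowIdx i) (highIdx i)) ↔ ∃ i j, i ⋖ j ∧ p i j := by
  constructor
  · rintro ⟨i, hi⟩
    exact ⟨lowIdx i, highIdx i, Fin.covBy_iff.mpr (Nat.covBy_iff_add_one_eq.mpr rfl), hi⟩
  · rintro ⟨i, j, hij, hp⟩
    have hval : i.val + 1 = j.val := Nat.covBy_iff_add_one_eq.mp (Fin.covBy_iff.mp hij)
    have hhigh : highIdx ⟨i, by omega⟩ = j := Fin.ext hval
    exact ⟨⟨i, by omega⟩, hhigh.symm ▸ hp⟩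

theorem symmetric_connectivity_criterion_general {n : ℕ} [LinearOrder α] [TopologicalSpace α]
    [OrderClosedTopology α] {S : Set (Fin n → α)}
    (hS : ∀ (σ : Perm (Fin n)) (u : Fin n → α), u ∈ S → σ • u ∈ S)
    {x : Fin n → α} (hx : x ∈ S ∩ {u | Monotone u}) {y y' : Fin n → α} (hy' : Monotone y')
    (hyy' : ∃ τ : Perm (Fin n), τ • y = y') :
    y ∈ connectedComponentIn S x ↔
      y' ∈ connectedComponentIn (S ∩ {u | Monotone u}) x ∧
        ∃ σ ∈ Subgroup.closure {τ : Perm (Fin n) | ∃ i j, i ⋖ j ∧ τ = swap i j ∧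
            (connectedComponentIn (S ∩ {u | Monotone u}) x ∩ {u | u i = u j}).Nonempty},
          σ • y = y' := by
  have := continuousConstSMul_arrowAction_s16 (ι := Fin n) (α := α)
  have hF := isStrictFundamentalDomain_setOf_monotone n α
  have hSfixed : IsFixedBlock (Perm (Fin n)) S :=
    isInvariantBlock_iff_isFixedBlock.mp fun σ => smul_set_subset_iff.mpr fun u => hS σ u
  have hCF : connectedComponentIn (S ∩ {u | Monotone u}) x ⊆ {u | Monotone u} :=
    (connectedComponentIn_subset _ _).trans inter_subset_right
  rw [← isotropySubgroup_eq_closure_covBy hCF, ← hF.mem_isotropySubgroup_smul_iff hCF hy' hyy',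
    ← hF.connectedComponentIn_eq_smul isClosed_monotone hSfixed hx]

end Permutation

/-- Let `S ⊆ ℝⁿ` be closed, bounded and invariant under the
coordinate-permutation action of `S_n`, such that `S_c = S ∩ W_c` has finitely many
connected components. Let `x ∈ S_c`, `y ∈ S`, and let `y'` be the sorted version
of `y`. Let `𝒞` be the connected component of `S_c` containing `x` and `G(𝒞)` the
subgroup generated by the adjacent transpositions whose wall meets `𝒞`. Then `x`
and `y` lie in the same connected component of `S` if and only if `y' ∈ 𝒞` and
some `σ ∈ G(𝒞)` maps `y` to `y'`. -/
theorem symmetric_connectivity_criterion (n : ℕ) (S : Set (Fin n → ℝ))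
    (hcl : IsClosed S) (hbd : Bornology.IsBounded S)
    (hsymm : ∀ (σ : Equiv.Perm (Fin n)) (x : Fin n → ℝ), x ∈ S → permAct σ x ∈ S)
    (hfin : {C : Set (Fin n → ℝ) |
      ∃ z ∈ S ∩ weylChamber n, C = connectedComponentIn (S ∩ weylChamber n) z}.Finite)
    (x : Fin n → ℝ) (hx : x ∈ S ∩ weylChamber n) (y : Fin n → ℝ) (hy : y ∈ S)
    (y' : Fin n → ℝ) (hy'mono : Monotone y') (hy'orb : ∃ τ : Equiv.Perm (Fin n), permAct τ y = y') :
    y ∈ connectedComponentIn S x ↔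
      (y' ∈ connectedComponentIn (S ∩ weylChamber n) x ∧
        ∃ σ ∈ Subgroup.closure {τ : Equiv.Perm (Fin n) |
            ∃ i : Fin (n - 1), τ = Equiv.swap (lowIdx i) (highIdx i) ∧
              (connectedComponentIn (S ∩ weylChamber n) x ∩ wall n i).Nonempty},
          permAct σ y = y') := by
  have hgeneral := symmetric_connectivity_criterion_general hsymm hx hy'mono hy'orb
  simp only [← exists_lowIdx_highIdx_iff] at hgeneral
  exact hgeneral
end
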